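/- arXiv:math/0411431 — 9 statements merged into one kernel-verified Lean document; each statement's English description precedes it below -/
import Mathlib

section
/- Let K be a real-valued function on symmetric 3×3 matrices with rational entries such that: (i) K is invariant under simultaneous cyclic permutation of rows and columns, i.e. K([a_{σ(i)σ(j)}]) = K([a_{ij}]) for the cyclic permutation σ = (1 2 3); and (ii) for all rationals a, a', b, b', c, c', ℓ, a₂₂, a₂₃, a₃₃, the value of K at the symmetric matrix with entries (1,1) = a + a' + 2ℓ, (1,2) = b + b', (1,3) = c + c', (2,2) = a₂₂, (2,3) = a₂₃, (3,3) = a₃₃ equals the sum of the values of K at the symmetric matrix with first row (a, b, c) and the same entries a₂₂, a₂₃, a₃₃, and at the symmetric matrix with first row (a', b', c') and the same entries a₂₂, a₂₃, a₃₃. Then K vanishes on every symmetric 3×3 rational matrix. -/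
/-!
Since `ℓ` is free, the splitting relation makes `K` independent of the `(1,1)` entry and additive
in the pair of remaining first-row entries `(a₁₂, a₁₃)`; in particular `K` vanishes when both are
zero. Cyclic symmetry carries this to every row. Any two of the off-diagonal entries
`a₁₂, a₁₃, a₂₃` lie in a common row, so additivity first splits `K` into values at matrices where
one off-diagonal entry is zero, and then into values at matrices with a single nonzero off-diagonal
entry. Such a matrix has a row that is zero off the diagonal, so `K` vanishes there.
-/

/-- A real-valued function on symmetric 3×3 rational matrices that is
invariant under simultaneous cyclic permutation of rows and columns and satisfies the
splitting relation coming from cutting a leaf of a Y-graph vanishes on all symmetric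
3×3 rational matrices. -/
theorem stmt1 (K : Matrix (Fin 3) (Fin 3) ℚ → ℝ)
    (hcyc : ∀ A : Matrix (Fin 3) (Fin 3) ℚ, A.IsSymm →
      K (A.submatrix (finRotate 3) (finRotate 3)) = K A)
    (hsplit : ∀ a a' b b' c c' ℓ a22 a23 a33 : ℚ,
      K !![a + a' + 2 * ℓ, b + b', c + c'; b + b', a22, a23; c + c', a23, a33] =
        K !![a, b, c; b, a22, a23; c, a23, a33] +
          K !![a', b', c'; b', a22, a23; c', a23, a33]) :
    ∀ A : Matrix (Fin 3) (Fin 3) ℚ, A.IsSymm → K A = 0 := by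
  -- `k a b c d e f` is the value of `K` at the symmetric matrix with these upper-triangular entries.
  obtain ⟨k, hk⟩ : ∃ k : ℚ → ℚ → ℚ → ℚ → ℚ → ℚ → ℝ, ∀ a b c d e f,
      k a b c d e f = K !![a, b, c; b, d, e; c, e, f] := ⟨_, fun _ _ _ _ _ _ => rfl⟩
  have cyc : ∀ a b c d e f, k a b c d e f = k d e b f c a := by
    intro a b c d e f
    rw [hk, hk, ← hcyc]
    · congr 1
      ext i j
      fin_cases i <;> fin_cases j <;> rfl
    · ext i j
      fin_cases i <;> fin_cases j <;> rfl
  have split : ∀ a a' b b' c c' ℓ d e f,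
      k (a + a' + 2 * ℓ) (b + b') (c + c') d e f = k a b c d e f + k a' b' c' d e f := by
    intros
    simp only [hk, hsplit]
  have row_zero : ∀ a d e f, k a 0 0 d e f = 0 := by
    intro a d e f
    -- Choosing `ℓ = -a / 2` gives `k a = k a + k a` when the rest of the row is zero.
    have h := split a a 0 0 0 0 (-a / 2) d e f
    rw [show a + a + 2 * (-a / 2) = a by ring, add_zero] at h
    linarith
  have row_add : ∀ a b c d e f, k a b c d e f = k 0 b 0 d e f + k 0 0 c d e f := by
    intro a b c d e f
    have h := split 0 0 b 0 0 c (a / 2) d e f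
    rwa [show (0 : ℚ) + 0 + 2 * (a / 2) = a by ring, add_zero, zero_add] at h
  have only_b : ∀ a b d f, k a b 0 d 0 f = 0 := by
    intro a b d f
    rw [cyc, cyc, row_zero]
  have only_c : ∀ a c d f, k a 0 c d 0 f = 0 := by
    intro a c d f
    rw [cyc, row_zero]
  have vanish : ∀ a b c d e f, k a b c d e f = 0 := by
    intro a b c d e f
    have hb : k 0 b 0 d e f = 0 := by
      rw [cyc, row_add, only_b, only_c, add_zero]
    have hc : k 0 0 c d e f = 0 := by
      rw [cyc, cyc, row_add, only_b, only_c, add_zero]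
    rw [row_add, hb, hc, add_zero]
  intro A hA
  rw [← vanish (A 0 0) (A 0 1) (A 0 2) (A 1 1) (A 1 2) (A 2 2), hk]
  congr 1
  ext i j
  fin_cases i <;> fin_cases j <;> first | rfl | exact hA.apply _ _
end

section
/- Let R be a commutative ring, let M and N be R-modules, let g be a natural number, let α : {1,…,g} → M and β : {1,…,g} → N be families of elements, and let F : M × M × M → R and G : N × N × N → R be alternating trilinear maps. Then the sum over all functions f : {1,2,3} → {1,…,g} of F(α_{f(1)}, α_{f(2)}, α_{f(3)}) · G(β_{f(3)}, β_{f(2)}, β_{f(1)}) equals −6 times the sum over all triples 1 ≤ i < j < k ≤ g of F(α_i, α_j, α_k) · G(β_i, β_j, β_k). -/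
/-!
The summand `F(α_i, α_j, α_k) * G(β_i, β_j, β_k)` is symmetric in `i, j, k`, since the two signs of
a transposition cancel, and it vanishes when two indices agree. So its sum over all triples is `6`
times its sum over increasing triples (`sum_eq_six_mul`). Reversing the arguments of `G` is a
transposition, which contributes the remaining sign `-1`.
-/

/-- Every triple of distinct indices is a rearrangement of exactly one increasing triple, and each
increasing triple has six rearrangements. -/
theorem sum_eq_six_mul {R : Type*} [CommRing R] {g : ℕ} (H : Fin g → Fin g → Fin g → R)
    (h₁₂ : ∀ i j k, H j i k = H i j k) (h₂₃ : ∀ i j k, H i k j = H i j k)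
    (h₀ : ∀ i k, H i i k = 0) :
    ∑ i, ∑ j, ∑ k, H i j k =
      6 * ∑ i, ∑ j ∈ Finset.Ioi i, ∑ k ∈ Finset.Ioi j, H i j k := by
  -- `T` is `H` cut off to increasing triples; `H` is the sum of the six rearrangements of `T`.
  let T : Fin g → Fin g → Fin g → R := fun i j k => if i < j ∧ j < k then H i j k else 0
  have hT : ∑ i, ∑ j ∈ Finset.Ioi i, ∑ k ∈ Finset.Ioi j, H i j k = ∑ i, ∑ j, ∑ k, T i j k := by
    simp only [T, ite_and, ← Finset.filter_lt_eq_Ioi, Finset.sum_filter]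
    refine Finset.sum_congr rfl fun i _ => Finset.sum_congr rfl fun j _ => ?_
    split_ifs <;> simp
  have hH : ∀ i j k, H i j k = T i j k + T i k j + T j i k + T k i j + T j k i + T k j i := by
    intro i j k
    simp only [T]
    grind
  have s₂ : ∑ i, ∑ j, ∑ k, T i k j = ∑ i, ∑ j, ∑ k, T i j k :=
    Finset.sum_congr rfl fun i _ => Finset.sum_comm
  have s₃ : ∑ i, ∑ j, ∑ k, T j i k = ∑ i, ∑ j, ∑ k, T i j k := Finset.sum_comm
  have s₄ : ∑ i, ∑ j, ∑ k, T k i j = ∑ i, ∑ j, ∑ k, T i j k := by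
    rw [← s₃]
    exact Finset.sum_congr rfl fun i _ => Finset.sum_comm
  have s₅ : ∑ i, ∑ j, ∑ k, T j k i = ∑ i, ∑ j, ∑ k, T i j k := by
    rw [← s₂]
    exact Finset.sum_comm
  have s₆ : ∑ i, ∑ j, ∑ k, T k j i = ∑ i, ∑ j, ∑ k, T i j k := by
    rw [← s₄]
    exact Finset.sum_comm
  rw [hT]
  simp only [hH, Finset.sum_add_distrib, s₂, s₃, s₄, s₅, s₆]
  ring

section

variable {R : Type*} [CommRing R] {M : Type*} [AddCommMonoid M] [Module R M]
  (F : AlternatingMap R M R (Fin 3)) (x y z : M)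

theorem alternating_swap₁₂ : F ![y, x, z] = -F ![x, y, z] := by
  rw [← F.map_swap ![x, y, z] (show (0 : Fin 3) ≠ 1 by decide)]
  congr 1
  ext i
  fin_cases i <;> rfl

theorem alternating_swap₂₃ : F ![x, z, y] = -F ![x, y, z] := by
  rw [← F.map_swap ![x, y, z] (show (1 : Fin 3) ≠ 2 by decide)]
  congr 1
  ext i
  fin_cases i <;> rfl

theorem alternating_swap₁₃ : F ![z, y, x] = -F ![x, y, z] := by
  rw [alternating_swap₁₂, alternating_swap₂₃, alternating_swap₁₂, neg_neg]

end

/-- For alternating trilinear maps `F` on `M` and `G` on `N` and families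
`α : Fin g → M`, `β : Fin g → N`, the sum over all functions `f : Fin 3 → Fin g` of
`F(α_{f 0}, α_{f 1}, α_{f 2}) * G(β_{f 2}, β_{f 1}, β_{f 0})` equals `-6` times the sum
over triples `i < j < k` of `F(α_i, α_j, α_k) * G(β_i, β_j, β_k)`. -/
theorem stmt2 {R : Type*} [CommRing R] {M N : Type*}
    [AddCommMonoid M] [Module R M] [AddCommMonoid N] [Module R N]
    (g : ℕ) (α : Fin g → M) (β : Fin g → N)
    (F : AlternatingMap R M R (Fin 3)) (G : AlternatingMap R N R (Fin 3)) :
    ∑ f : Fin 3 → Fin g,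
        F ![α (f 0), α (f 1), α (f 2)] * G ![β (f 2), β (f 1), β (f 0)] =
      (-6 : R) * ∑ i : Fin g, ∑ j ∈ Finset.Ioi i, ∑ k ∈ Finset.Ioi j,
        F ![α i, α j, α k] * G ![β i, β j, β k] := by
  have hsum : ∀ K : Fin g → Fin g → Fin g → R,
      ∑ f : Fin 3 → Fin g, K (f 0) (f 1) (f 2) = ∑ i, ∑ j, ∑ k, K i j k := by
    intro K
    simp only [← Fintype.sum_prod_type']
    refine Fintype.sum_equiv
      ⟨fun f => (f 0, f 1, f 2), fun p => ![p.1, p.2.1, p.2.2], fun f => ?_, fun p => rfl⟩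
      _ _ fun f => rfl
    ext i
    fin_cases i <;> rfl
  let H : Fin g → Fin g → Fin g → R := fun i j k => F ![α i, α j, α k] * G ![β i, β j, β k]
  have hrev : ∀ f : Fin 3 → Fin g,
      F ![α (f 0), α (f 1), α (f 2)] * G ![β (f 2), β (f 1), β (f 0)] =
        -H (f 0) (f 1) (f 2) := by
    intro f
    rw [alternating_swap₁₃ G (β (f 0)), mul_neg]
  rw [Finset.sum_congr rfl fun f _ => hrev f, Finset.sum_neg_distrib, hsum H,
    sum_eq_six_mul H, neg_mul]
  · intro i j k
    simp only [H]
    rw [alternating_swap₁₂ F (α i), alternating_swap₁₂ G (β i), neg_mul_neg]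
  · intro i j k
    simp only [H]
    rw [alternating_swap₂₃ F _ (α j), alternating_swap₂₃ G _ (β j), neg_mul_neg]
  · intro i k
    have : F ![α i, α i, α k] = 0 :=
      F.map_eq_zero_of_eq _ (i := 0) (j := 1) rfl (by decide)
    simp only [H, this, zero_mul]
end

section
/- Let p be an odd prime and let G be a nontrivial finite abelian p-group equipped with a nondegenerate symmetric biadditive pairing B : G × G → ℚ/ℤ. Let p^k be the exponent of G (the largest order of an element of G). Then there exists x ∈ G such that B(x, x) = u/p^k + ℤ for some integer u coprime to p; equivalently, B(x, x) has order exactly p^k in ℚ/ℤ. -/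
/-!
If no diagonal value `B x x` had order `p ^ k`, then `p ^ (k - 1)` would kill every `B x x`.
Polarization, `B (x + y) (x + y) = B x x + B y y + 2 B x y`, then shows that
`2 p ^ (k - 1)` kills every `B x y`. So does `p ^ k`, and `p` is odd, hence `p ^ (k - 1)`
itself kills every `B x y`. By nondegeneracy `p ^ (k - 1)` kills `G`, contradicting the
definition of the exponent. The explicit form `u / p ^ k` of an element of order `p ^ k`
is `AddCircle.addOrderOf_eq_pos_iff`.
-/

/-- If `p` is an odd prime and `G` a nontrivial finite abelian `p`-group
with a nondegenerate symmetric biadditive pairing `B : G × G → ℚ/ℤ`, and `p ^ k` is the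
exponent of `G`, then there is `x ∈ G` with `B x x = u / p ^ k` for some integer `u`
coprime to `p`; equivalently `B x x` has order exactly `p ^ k` in `ℚ/ℤ`. -/
theorem stmt4 {G : Type} [AddCommGroup G] [Fintype G]
    (p : ℕ) (hp : p.Prime) (hodd : p ≠ 2)
    (hnt : Nontrivial G)
    (hpgroup : ∀ x : G, ∃ n : ℕ, addOrderOf x = p ^ n)
    (B : G → G → AddCircle (1 : ℚ))
    (hsymm : ∀ x y : G, B x y = B y x)
    (haddl : ∀ x y z : G, B (x + y) z = B x z + B y z)
    (haddr : ∀ x y z : G, B x (y + z) = B x y + B x z)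
    (hnd : ∀ x : G, (∀ y : G, B x y = 0) → x = 0)
    (k : ℕ) (hk : AddMonoid.exponent G = p ^ k) :
    ∃ (x : G) (u : ℤ), Int.gcd u p = 1 ∧
      B x x = (((u : ℚ) / (p : ℚ) ^ k : ℚ) : AddCircle (1 : ℚ)) ∧
      addOrderOf (B x x) = p ^ k := by
  have hnsmul : ∀ (n : ℕ) (x y : G), B (n • x) y = n • B x y := fun n x y =>
    map_nsmul (AddMonoidHom.mk' (fun x => B x y) fun a b => haddl a b y) n x
  have hzero : ∀ y : G, B 0 y = 0 := fun y => by simpa using hnsmul 0 0 y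
  -- The exponent of a nontrivial group is not `1`, so `k` is a successor.
  obtain _ | k := k
  · exact absurd (AddMonoid.exp_eq_one_iff.mp (by simpa using hk))
      (not_subsingleton_iff_nontrivial.mpr hnt)
  have hkill : ∀ x y : G, p ^ (k + 1) • B x y = 0 := fun x y => by
    rw [← hnsmul, ← hk, AddMonoid.exponent_nsmul_eq_zero, hzero]
  obtain ⟨x, hx⟩ : ∃ x : G, ¬ p ^ k • B x x = 0 := by
    by_contra! hdiag
    have hB : ∀ x y : G, p ^ k • B x y = 0 := fun x y => by
      have htwo : 2 • (p ^ k • B x y) = 0 := by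
        have h := hdiag (x + y)
        rw [haddl, haddr, haddr, hsymm y x, smul_add, smul_add, smul_add, hdiag x, hdiag y,
          zero_add, add_zero] at h
        rw [two_nsmul, h]
      have hpz : p • (p ^ k • B x y) = 0 := by
        rw [← mul_nsmul', ← pow_succ', hkill]
      obtain ⟨m, hm⟩ := hp.odd_of_ne_two hodd
      rwa [hm, add_nsmul, one_nsmul, mul_nsmul, ← hm, htwo, nsmul_zero, zero_add] at hpz
    have hdvd : p ^ (k + 1) ∣ p ^ k := hk ▸ AddMonoid.exponent_dvd_of_forall_nsmul_eq_zero
      fun x => hnd _ fun y => by rw [hnsmul, hB]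
    have := (Nat.pow_dvd_pow_iff_le_right hp.one_lt).mp hdvd
    omega
  have : Fact p.Prime := ⟨hp⟩
  have : Fact ((0 : ℚ) < 1) := ⟨one_pos⟩
  have hord : addOrderOf (B x x) = p ^ (k + 1) := addOrderOf_eq_prime_pow hx (hkill x x)
  obtain ⟨m, -, hgcd, hm⟩ := (AddCircle.addOrderOf_eq_pos_iff (pow_pos hp.pos _)).mp hord
  refine ⟨x, m, ?_, ?_, hord⟩
  · rw [Int.gcd_natCast_natCast]
    exact Nat.Coprime.coprime_dvd_right (dvd_pow_self p k.succ_ne_zero) hgcd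
  · rw [← hm]
    push_cast
    rw [mul_one]
end

section
/- Let p be an odd prime and let G be a finite abelian p-group equipped with a nondegenerate symmetric biadditive pairing B : G × G → ℚ/ℤ. Then there exist elements x₁, …, x_m ∈ G and integers k₁, …, k_m ≥ 1 such that: G is the internal direct sum of the cyclic subgroups ⟨x₁⟩, …, ⟨x_m⟩; each x_i has order p^{k_i}; B(x_i, x_j) = 0 for i ≠ j; and B(x_i, x_i) = s_i/p^{k_i} + ℤ with s_i ∈ {1, n(p)} for every i. -/
/-!
Write `β` for the pairing `B`, bundled as a biadditive map.
Every nonzero nondegenerate subgroup `H` of `G` splits off a cyclic orthogonal summand of maximal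
order. If `p ^ (j + 1)` is the exponent of `H` and `p ^ j • x ≠ 0`, then nondegeneracy gives `y ∈ H`
with `p ^ j • β x y ≠ 0`. This element is killed by the odd prime `p`, so polarization shows that
`p ^ j • β w w ≠ 0` for one of `w = x, y, x + y` (`exists_diagonal`). Hence
`β w w = a / p ^ (j + 1)` with `a` prime to `p`. The unit group of `ℤ / p ^ (j + 1)` is cyclic, so `a`
times a suitable square is `1` or the least nonresidue (`exists_sq_mul`), and rescaling `w` yields
a generator `z` with normalized self-pairing. As `β z z` generates the `p ^ (j + 1)`-torsion of
`ℚ / ℤ`, `H` is spanned by `z` and the orthogonal complement of `z` in `H`, which is again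
nondegenerate; well-founded induction on `H` gives a spanning orthogonal family
(`exists_family`). Independence of that family comes for free: pairing a relation with `xᵢ` shows
that its `i`-th term vanishes.
-/

/-- `nonResidue p` is the smallest integer in `{2, …, p - 1}` that is not a square
modulo `p` (denoted `n(p)` in the paper). -/
noncomputable def nonResidue (p : ℕ) : ℕ :=
  sInf {n : ℕ | 2 ≤ n ∧ n ≤ p - 1 ∧ ¬ IsSquare (n : ZMod p)}

/-! ### Torsion of `ℚ / ℤ` -/

lemma frac_eq_zero_iff {p : ℕ} (hp : p.Prime) (k : ℕ) (a : ℤ) :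
    (((a : ℚ) / (p : ℚ) ^ k : ℚ) : AddCircle (1 : ℚ)) = 0 ↔ (p : ℤ) ^ k ∣ a := by
  have hp0 : (p : ℚ) ^ k ≠ 0 := pow_ne_zero _ (by exact_mod_cast hp.ne_zero)
  rw [AddCircle.coe_eq_zero_iff]
  constructor
  · rintro ⟨n, hn⟩
    refine ⟨n, ?_⟩
    rw [zsmul_eq_mul, mul_one, eq_div_iff hp0] at hn
    have : (a : ℚ) = ((p : ℤ) ^ k * n : ℤ) := by
      push_cast
      rw [← hn, mul_comm]
    exact_mod_cast this
  · rintro ⟨n, rfl⟩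
    refine ⟨n, ?_⟩
    rw [zsmul_eq_mul, mul_one, eq_div_iff hp0]
    push_cast
    ring

lemma zsmul_frac (p k : ℕ) (c a : ℤ) :
    c • (((a : ℚ) / (p : ℚ) ^ k : ℚ) : AddCircle (1 : ℚ)) =
      ((((c * a : ℤ) : ℚ) / (p : ℚ) ^ k : ℚ) : AddCircle (1 : ℚ)) := by
  rw [← AddCircle.coe_zsmul, zsmul_eq_mul]
  push_cast
  rw [mul_div_assoc]

lemma exists_frac {p : ℕ} (hp : p.Prime) (k : ℕ) (t : AddCircle (1 : ℚ))
    (ht : p ^ k • t = 0) :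
    ∃ a : ℤ, t = (((a : ℚ) / (p : ℚ) ^ k : ℚ) : AddCircle (1 : ℚ)) := by
  have hp0 : (p : ℚ) ^ k ≠ 0 := pow_ne_zero _ (by exact_mod_cast hp.ne_zero)
  obtain ⟨r, rfl⟩ := QuotientAddGroup.mk_surjective t
  change p ^ k • ((r : ℚ) : AddCircle (1 : ℚ)) = 0 at ht
  rw [← AddCircle.coe_nsmul, AddCircle.coe_eq_zero_iff] at ht
  obtain ⟨a, ha⟩ := ht
  refine ⟨a, ?_⟩
  change ((r : ℚ) : AddCircle (1 : ℚ)) = _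
  congr 1
  rw [eq_div_iff hp0]
  rw [zsmul_eq_mul, mul_one, nsmul_eq_mul] at ha
  push_cast at ha
  rw [ha, mul_comm]

lemma frac_congr {p : ℕ} (hp : p.Prime) (k : ℕ) {a b : ℤ} (h : (p : ℤ) ^ k ∣ a - b) :
    (((a : ℚ) / (p : ℚ) ^ k : ℚ) : AddCircle (1 : ℚ)) =
      (((b : ℚ) / (p : ℚ) ^ k : ℚ) : AddCircle (1 : ℚ)) := by
  rw [← sub_eq_zero, ← AddCircle.coe_sub, ← sub_div, ← Int.cast_sub]
  exact (frac_eq_zero_iff hp k _).2 h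

/-! ### Square classes modulo `p ^ k` -/

/-- The set defining `nonResidue p` is nonempty, so the infimum is attained. -/
lemma nonResidue_spec {p : ℕ} (hp : p.Prime) (hodd : p ≠ 2) :
    2 ≤ nonResidue p ∧ nonResidue p ≤ p - 1 ∧ ¬ IsSquare (nonResidue p : ZMod p) := by
  have := Fact.mk hp
  refine Nat.sInf_mem (s := {n : ℕ | 2 ≤ n ∧ n ≤ p - 1 ∧ ¬ IsSquare (n : ZMod p)}) ?_
  obtain ⟨a, ha⟩ := FiniteField.exists_nonsquare (F := ZMod p) (by rwa [ZMod.ringChar_zmod_n])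
  refine ⟨a.val, ?_, Nat.le_sub_one_of_lt a.val_lt, by rwa [ZMod.natCast_zmod_val]⟩
  by_contra! h
  have h' : a.val = 0 ∨ a.val = 1 := by omega
  rcases h' with h' | h'
  · rw [ZMod.val_eq_zero] at h'
    exact ha (h' ▸ IsSquare.zero)
  · have : a = 1 := by rw [← ZMod.natCast_zmod_val a, h', Nat.cast_one]
    exact ha (this ▸ IsSquare.one)

/-- In a cyclic group the squares have index at most two. -/
lemma isSquare_mul_of_not {M : Type*} [CommGroup M] [IsCyclic M] {a b : M}
    (ha : ¬ IsSquare a) (hb : ¬ IsSquare b) : IsSquare (a * b) := by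
  obtain ⟨g, hg⟩ := IsCyclic.exists_generator (α := M)
  obtain ⟨m, rfl⟩ := Subgroup.mem_zpowers_iff.1 (hg a)
  obtain ⟨n, rfl⟩ := Subgroup.mem_zpowers_iff.1 (hg b)
  have key : ∀ i : ℤ, ¬ IsSquare (g ^ i) → Odd i := by
    intro i hi
    by_contra hc
    obtain ⟨r, rfl⟩ := Int.not_odd_iff_even.1 hc
    exact hi ⟨g ^ r, zpow_add g r r⟩
  obtain ⟨r, hr⟩ := (key m ha).add_odd (key n hb)
  exact ⟨g ^ r, by rw [← zpow_add, hr, zpow_add]⟩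

/-- Modulo `p ^ k`, an integer prime to `p` times a suitable square is `1` or `nonResidue p`. -/
lemma exists_sq_mul {p : ℕ} (hp : p.Prime) (hodd : p ≠ 2) {k : ℕ} (hk : k ≠ 0) (a : ℤ)
    (ha : ¬ (p : ℤ) ∣ a) :
    ∃ u s : ℤ, (s = 1 ∨ s = (nonResidue p : ℤ)) ∧ ¬ (p : ℤ) ∣ s ∧
      (p : ℤ) ^ k ∣ u ^ 2 * a - s := by
  have := Fact.mk hp
  have : NeZero (p ^ k) := ⟨pow_ne_zero _ hp.ne_zero⟩
  obtain ⟨hn2, hnp, hns⟩ := nonResidue_spec hp hodd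
  have hnd : ¬ (p : ℤ) ∣ (nonResidue p : ℤ) := by
    rw [Int.natCast_dvd_natCast]
    exact Nat.not_dvd_of_pos_of_lt (by omega) (by omega)
  have h1d : ¬ (p : ℤ) ∣ 1 := by
    rw [Int.natCast_dvd_ofNat]
    exact hp.one_lt.ne' ∘ Nat.dvd_one.1
  have unit : ∀ b : ℤ, ¬ (p : ℤ) ∣ b → IsUnit (b : ZMod (p ^ k)) := by
    intro b hb
    rw [ZMod.coe_int_isUnit_iff_isCoprime]
    push_cast
    exact ((Nat.prime_iff_prime_int.1 hp).coprime_iff_not_dvd.2 hb).pow_left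
  have : IsCyclic (ZMod (p ^ k))ˣ := ZMod.isCyclic_units_of_prime_pow p hp hodd k
  obtain ⟨α, hα⟩ := unit a ha
  obtain ⟨ν, hν⟩ := unit _ hnd
  -- it suffices to find the square root of `s / a` in the unit group
  have fin : ∀ (s : ℤ) (σ : (ZMod (p ^ k))ˣ), (σ : ZMod (p ^ k)) = s → IsSquare (α * σ) →
      ∃ u : ℤ, (p : ℤ) ^ k ∣ u ^ 2 * a - s := by
    rintro s σ hσ ⟨r, hr⟩
    obtain ⟨u, hu⟩ := ZMod.intCast_surjective ((r * α⁻¹ : (ZMod (p ^ k))ˣ) : ZMod (p ^ k))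
    refine ⟨u, ?_⟩
    have h : ((p ^ k : ℕ) : ℤ) ∣ u ^ 2 * a - s := by
      rw [← ZMod.intCast_zmod_eq_zero_iff_dvd]
      push_cast
      rw [hu, ← hα, ← hσ, sub_eq_zero]
      norm_cast
      calc (r * α⁻¹) ^ 2 * α = r * r * α⁻¹ := by
            rw [pow_two]; simp only [mul_assoc, mul_left_comm, inv_mul_cancel, mul_one]
        _ = σ := by rw [← hr, mul_comm, inv_mul_cancel_left]
    exact_mod_cast h
  by_cases hsq : IsSquare α
  · obtain ⟨u, hu⟩ := fin 1 1 (by simp) (by simpa using hsq)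
    exact ⟨u, 1, Or.inl rfl, h1d, hu⟩
  · have hνsq : ¬ IsSquare ν := by
      intro h
      apply hns
      have h2 : IsSquare ((nonResidue p : ℤ) : ZMod (p ^ k)) := by
        rw [← hν]
        exact h.map (Units.coeHom _)
      have h3 := h2.map (ZMod.castHom (dvd_pow_self p hk) (ZMod p))
      simpa using h3
    obtain ⟨u, hu⟩ := fin _ ν hν (isSquare_mul_of_not hsq hνsq)
    exact ⟨u, _, Or.inr rfl, hnd, hu⟩

/-! ### Orthogonal splitting -/

section

variable {G : Type} [AddCommGroup G] (β : G →+ G →+ AddCircle (1 : ℚ))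

/-- Polarization: if `p ^ j • β x y` is nonzero but killed by the odd prime `p`, then some `w` in the
subgroup has `p ^ j • β w w ≠ 0`. -/
lemma exists_diagonal {p : ℕ} (hp : p.Prime) (hodd : p ≠ 2) (hsymm : ∀ x y, β x y = β y x)
    (H : AddSubgroup G) (j : ℕ) (hk : ∀ h ∈ H, p ^ (j + 1) • h = 0) {x y : G} (hx : x ∈ H)
    (hy : y ∈ H) (hxy : p ^ j • β x y ≠ 0) : ∃ w ∈ H, p ^ j • β w w ≠ 0 := by
  by_contra! hc
  have h1 := hc x hx
  have h2 := hc y hy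
  have h3 := hc (x + y) (H.add_mem hx hy)
  simp only [map_add, AddMonoidHom.add_apply, hsymm y x, smul_add, h1, h2, zero_add,
    add_zero] at h3
  have h4 : addOrderOf (p ^ j • β x y) ∣ 2 := by
    rw [addOrderOf_dvd_iff_nsmul_eq_zero, two_nsmul]
    exact h3
  have h5 : addOrderOf (p ^ j • β x y) ∣ p := by
    rw [addOrderOf_dvd_iff_nsmul_eq_zero, ← mul_nsmul', mul_comm, ← pow_succ,
      ← AddMonoidHom.nsmul_apply, ← map_nsmul, hk x hx, map_zero, AddMonoidHom.zero_apply]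
  have h6 := Nat.dvd_gcd h4 h5
  rw [(Nat.coprime_primes Nat.prime_two hp).2 hodd.symm, Nat.dvd_one,
    AddMonoid.addOrderOf_eq_one_iff] at h6
  exact hxy h6

/-- A nonzero nondegenerate subgroup of exponent `p ^ (j + 1)` contains an element of that order
whose self-pairing is normalized. -/
lemma exists_normalized {p : ℕ} (hp : p.Prime) (hodd : p ≠ 2) (hsymm : ∀ x y, β x y = β y x)
    (H : AddSubgroup G) (hnd : ∀ x ∈ H, (∀ y ∈ H, β x y = 0) → x = 0)
    (j : ℕ) (hk : ∀ h ∈ H, p ^ (j + 1) • h = 0) {x : G} (hx : x ∈ H) (hxj : p ^ j • x ≠ 0) :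
    ∃ z ∈ H, ∃ s : ℤ, (s = 1 ∨ s = (nonResidue p : ℤ)) ∧ ¬ (p : ℤ) ∣ s ∧
      addOrderOf z = p ^ (j + 1) ∧
      β z z = (((s : ℚ) / (p : ℚ) ^ (j + 1) : ℚ) : AddCircle (1 : ℚ)) := by
  have := Fact.mk hp
  obtain ⟨y, hy, hxy⟩ : ∃ y ∈ H, β (p ^ j • x) y ≠ 0 := by
    by_contra! hc
    exact hxj (hnd _ (H.nsmul_mem hx _) hc)
  rw [map_nsmul, AddMonoidHom.nsmul_apply] at hxy
  obtain ⟨w, hw, hww⟩ := exists_diagonal β hp hodd hsymm H j hk hx hy hxy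
  -- `p ^ j` kills `a / p ^ (j + 1)` exactly when `p ∣ a`
  have hz : ∀ a : ℤ, p ^ j • (((a : ℚ) / (p : ℚ) ^ (j + 1) : ℚ) : AddCircle (1 : ℚ)) = 0 ↔
      (p : ℤ) ∣ a := by
    intro a
    rw [← natCast_zsmul, zsmul_frac, frac_eq_zero_iff hp, pow_succ]
    push_cast
    exact mul_dvd_mul_iff_left (pow_ne_zero _ (by exact_mod_cast hp.ne_zero))
  obtain ⟨a, ha⟩ := exists_frac hp (j + 1) (β w w) (by
    rw [← AddMonoidHom.nsmul_apply, ← map_nsmul, hk w hw, map_zero, AddMonoidHom.zero_apply])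
  rw [ha, Ne, hz] at hww
  obtain ⟨u, s, hs, hsp, hus⟩ := exists_sq_mul hp hodd j.succ_ne_zero a hww
  have hβ : β (u • w) (u • w) =
      (((s : ℚ) / (p : ℚ) ^ (j + 1) : ℚ) : AddCircle (1 : ℚ)) := by
    rw [map_zsmul, map_zsmul, AddMonoidHom.zsmul_apply, ha, zsmul_frac, zsmul_frac]
    apply frac_congr hp
    rwa [← mul_assoc, ← pow_two]
  refine ⟨u • w, H.zsmul_mem hw u, s, hs, hsp, ?_, hβ⟩
  refine addOrderOf_eq_prime_pow (fun h0 => hsp ?_) (hk _ (H.zsmul_mem hw u))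
  rw [← hz, ← hβ, ← AddMonoidHom.nsmul_apply, ← map_nsmul, h0, map_zero, AddMonoidHom.zero_apply]

/-- A nondegenerate subgroup is spanned by a normalized orthogonal family. Working with subgroups
of a fixed group avoids transporting the pairing in the induction. -/
lemma exists_family [Finite G] {p : ℕ} (hp : p.Prime) (hodd : p ≠ 2)
    (hsymm : ∀ x y, β x y = β y x) (N : ℕ) (hN : ∀ x : G, p ^ N • x = 0) (H : AddSubgroup G)
    (hnd : ∀ x ∈ H, (∀ y ∈ H, β x y = 0) → x = 0) :
    ∃ (m : ℕ) (x : Fin m → G) (k : Fin m → ℕ) (s : Fin m → ℤ),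
      (⨆ i, AddSubgroup.zmultiples (x i)) = H ∧
      (∀ i, 1 ≤ k i) ∧
      (∀ i, addOrderOf (x i) = p ^ k i) ∧
      (∀ i j, i ≠ j → β (x i) (x j) = 0) ∧
      (∀ i, (s i = 1 ∨ s i = (nonResidue p : ℤ)) ∧ ¬ (p : ℤ) ∣ s i ∧
        β (x i) (x i) = (((s i : ℚ) / (p : ℚ) ^ k i : ℚ) : AddCircle (1 : ℚ))) := by
  classical
  induction H using WellFoundedLT.induction with
  | ind H ih =>
  have hex : ∃ k, ∀ h ∈ H, p ^ k • h = 0 := ⟨N, fun h _ => hN h⟩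
  rcases hfind : Nat.find hex with _ | j
  · have h0 := Nat.find_spec hex
    rw [hfind] at h0
    refine ⟨0, Fin.elim0, Fin.elim0, Fin.elim0, ?_, fun i => i.elim0, fun i => i.elim0,
      fun i => i.elim0, fun i => i.elim0⟩
    rw [iSup_of_empty, eq_comm, AddSubgroup.eq_bot_iff_forall]
    intro h hh
    simpa using h0 h hh
  have hk := Nat.find_spec hex
  rw [hfind] at hk
  obtain ⟨x, hx, hxj⟩ : ∃ x ∈ H, p ^ j • x ≠ 0 := by
    have := Nat.find_min hex (m := j) (by omega)
    push Not at this
    exact this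
  obtain ⟨z, hzH, s, hs, hsp, hord, hβz⟩ :=
    exists_normalized β hp hodd hsymm H hnd j hk hx hxj
  -- the orthogonal complement of `z` in `H`
  set K : AddSubgroup G := H ⊓ (β z).ker with hK
  have hdec : ∀ g ∈ H, ∃ c : ℤ, g - c • z ∈ K := by
    intro g hg
    obtain ⟨b, hb⟩ := exists_frac hp (j + 1) (β z g) (by
      rw [← map_nsmul, hk g hg, map_zero])
    obtain ⟨v, w, hvw⟩ : IsCoprime ((p : ℤ) ^ (j + 1)) s :=
      ((Nat.prime_iff_prime_int.1 hp).coprime_iff_not_dvd.2 hsp).pow_left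
    -- `w` inverts `s` modulo `p ^ (j + 1)`
    refine ⟨b * w, H.sub_mem hg (H.zsmul_mem hzH _), ?_⟩
    change β z (g - (b * w) • z) = 0
    rw [map_sub, map_zsmul, hb, hβz, zsmul_frac, sub_eq_zero]
    exact frac_congr hp _ ⟨b * v, by linear_combination b * (-hvw)⟩
  have hzK : z ∉ K := by
    intro hmem
    have h0 : β z z = 0 := hmem.2
    rw [hβz, frac_eq_zero_iff hp] at h0
    exact hsp ((dvd_pow_self _ j.succ_ne_zero).trans h0)
  have hlt : K < H := lt_of_le_of_ne inf_le_left (fun h => hzK (h ▸ hzH))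
  obtain ⟨m, X, k, S, hsup, h1, h2, h3, h4⟩ := ih K hlt (by
    intro y hy hyK
    refine hnd y hy.1 (fun g hg => ?_)
    obtain ⟨c, hc⟩ := hdec g hg
    have hyz : β y z = 0 := by rw [hsymm]; exact hy.2
    have := hyK _ hc
    rwa [map_sub, map_zsmul, hyz, smul_zero, sub_zero] at this)
  have hXK : ∀ i, X i ∈ K := fun i => by
    rw [← hsup]
    exact AddSubgroup.mem_iSup_of_mem i (AddSubgroup.mem_zmultiples _)
  have hzX : ∀ i, β z (X i) = 0 := fun i => (hXK i).2
  refine ⟨m + 1, Fin.cons z X, Fin.cons (j + 1) k, Fin.cons s S, ?_, ?_, ?_, ?_, ?_⟩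
  · have hcons : (⨆ i, AddSubgroup.zmultiples ((Fin.cons z X : Fin (m + 1) → G) i)) =
        AddSubgroup.zmultiples z ⊔ K := by
      rw [← hsup]
      refine le_antisymm (iSup_le (Fin.cases le_sup_left fun i => ?_))
        (sup_le (le_iSup_of_le 0 le_rfl) (iSup_le fun i => le_iSup_of_le i.succ le_rfl))
      exact le_sup_of_le_right (le_iSup_of_le i le_rfl)
    rw [hcons]
    apply le_antisymm
    · exact sup_le ((AddSubgroup.zmultiples_le_of_mem hzH)) inf_le_left
    · intro g hg
      obtain ⟨c, hc⟩ := hdec g hg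
      exact AddSubgroup.mem_sup.2 ⟨c • z, ⟨c, rfl⟩, _, hc, by abel⟩
  · exact Fin.cases (by simp) (by simpa using h1)
  · exact Fin.cases (by simpa using hord) (by simpa using h2)
  · intro a b
    refine Fin.cases ?_ (fun a => ?_) a <;> refine Fin.cases ?_ (fun b => ?_) b
    · simp
    · exact fun _ => hzX b
    · exact fun _ => (hsymm _ _).trans (hzX a)
    · intro hab
      simpa using h3 a b (fun h => hab (h ▸ rfl))
  · exact Fin.cases ⟨hs, hsp, hβz⟩ h4

end


/-! ### The classification -/

/-- Wall's classification for odd primes: a finite abelian `p`-group with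
a nondegenerate symmetric biadditive pairing is the internal orthogonal direct sum of
cyclic subgroups `⟨xᵢ⟩` of order `p ^ kᵢ` with `B xᵢ xᵢ = sᵢ / p ^ kᵢ`, `sᵢ ∈ {1, n(p)}`. -/
theorem stmt6 {G : Type} [AddCommGroup G] [Fintype G]
    (p : ℕ) (hp : p.Prime) (hodd : p ≠ 2)
    (hpgroup : ∀ x : G, ∃ n : ℕ, addOrderOf x = p ^ n)
    (B : G → G → AddCircle (1 : ℚ))
    (hsymm : ∀ x y : G, B x y = B y x)
    (haddl : ∀ x y z : G, B (x + y) z = B x z + B y z)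
    (hnd : ∀ x : G, (∀ y : G, B x y = 0) → x = 0) :
    ∃ (m : ℕ) (x : Fin m → G) (k : Fin m → ℕ) (s : Fin m → ℤ),
      DirectSum.IsInternal (fun i => AddSubgroup.zmultiples (x i)) ∧
      (∀ i, 1 ≤ k i) ∧
      (∀ i, addOrderOf (x i) = p ^ k i) ∧
      (∀ i j, i ≠ j → B (x i) (x j) = 0) ∧
      (∀ i, (s i = 1 ∨ s i = (nonResidue p : ℤ)) ∧
        B (x i) (x i) = (((s i : ℚ) / (p : ℚ) ^ k i : ℚ) : AddCircle (1 : ℚ))) := by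
  have := Fact.mk hp
  let β : G →+ G →+ AddCircle (1 : ℚ) :=
    AddMonoidHom.mk' (fun x => AddMonoidHom.mk' (B x) (fun y z => by
      rw [hsymm, haddl, hsymm y, hsymm z])) (fun x y => by
      ext z
      exact haddl x y z)
  -- every order `p ^ n` satisfies `n < p ^ n ≤ |G|`
  have hN : ∀ x : G, p ^ Fintype.card G • x = 0 := by
    intro x
    obtain ⟨n, hn⟩ := hpgroup x
    rw [← addOrderOf_dvd_iff_nsmul_eq_zero, hn]
    apply pow_dvd_pow
    calc n ≤ p ^ n := (Nat.lt_pow_self hp.one_lt).le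
      _ = addOrderOf x := hn.symm
      _ ≤ Fintype.card G := addOrderOf_le_card_univ
  obtain ⟨m, x, k, s, hsup, h1, h2, h3, h4⟩ :=
    exists_family β hp hodd hsymm _ hN ⊤ (fun y _ hy => hnd y (fun g => hy g trivial))
  refine ⟨m, x, k, s, ⟨?_, ?_⟩, h1, h2, h3, fun i => ⟨(h4 i).1, (h4 i).2.2⟩⟩
  · rw [injective_iff_map_eq_zero]
    intro f hf
    -- pairing with `x i` only sees the `i`-th component
    have hpair : ∀ (i : Fin m) (f : DirectSum (Fin m) fun i => AddSubgroup.zmultiples (x i)),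
        β (x i) (DirectSum.coeAddMonoidHom (fun i => AddSubgroup.zmultiples (x i)) f) =
          β (x i) (f i : G) := by
      intro i f
      induction f using DirectSum.induction_on with
      | zero => simp
      | of l y =>
        rw [DirectSum.coeAddMonoidHom_of]
        by_cases hl : l = i
        · subst hl
          rw [DirectSum.of_eq_same]
        · rw [DirectSum.of_eq_of_ne _ _ _ (Ne.symm hl)]
          obtain ⟨c, hc⟩ := AddSubgroup.mem_zmultiples_iff.1 y.2
          rw [← hc, map_zsmul, h3 i l (Ne.symm hl)]
          simp
      | add f g hf hg => simp only [map_add, DirectSum.add_apply, AddSubgroup.coe_add, hf, hg]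
    ext i
    have h0 := hpair i f
    rw [hf, map_zero] at h0
    obtain ⟨c, hc⟩ := AddSubgroup.mem_zmultiples_iff.1 (f i).2
    obtain ⟨-, hsp, hxx⟩ := h4 i
    rw [← hc, map_zsmul, hxx, zsmul_frac, eq_comm, frac_eq_zero_iff hp] at h0
    have hcop : IsCoprime ((p : ℤ) ^ k i) (s i) :=
      ((Nat.prime_iff_prime_int.1 hp).coprime_iff_not_dvd.2 hsp).pow_left
    have hdvd := hcop.dvd_of_dvd_mul_right h0
    rw [DirectSum.zero_apply, AddSubgroup.coe_zero, ← hc, ← addOrderOf_dvd_iff_zsmul_eq_zero,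
      h2 i]
    exact_mod_cast hdvd
  · intro g
    have hg : g ∈ ⨆ i, AddSubgroup.zmultiples (x i) := hsup ▸ AddSubgroup.mem_top g
    induction hg using AddSubgroup.iSup_induction' with
    | hp i y hy => exact ⟨DirectSum.of _ i ⟨y, hy⟩, DirectSum.coeAddMonoidHom_of _ _ _⟩
    | h1 => exact ⟨0, map_zero _⟩
    | hadd a b _ _ ha hb =>
      obtain ⟨a', rfl⟩ := ha
      obtain ⟨b', rfl⟩ := hb
      exact ⟨a' + b', map_add _ _ _⟩
end

section
/- Let p be an odd prime and k ≥ 1 an integer. Then the orthogonal sum of two copies of the linking pairing [p^k, n(p)] is isomorphic to the orthogonal sum of two copies of [p^k, 1]; that is, there is an additive group automorphism φ of (ℤ/p^kℤ) × (ℤ/p^kℤ) such that for all (x, y), (x', y'), one has (x x' + y y')/p^k ≡ n(p)·(φ₁(x,y)·φ₁(x',y') + φ₂(x,y)·φ₂(x',y'))/p^k (mod ℤ), where φ = (φ₁, φ₂). -/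
/-- The linking pairing `B (x, y) = s * x * y / N mod ℤ` on `ℤ/Nℤ` (denoted
`[N, s]` resp. `A^k(n)` in the paper). -/
noncomputable def cyclicPairing (N : ℕ) (s : ℤ) (x y : ZMod N) : AddCircle (1 : ℚ) :=
  (((s : ℚ) * (x.val : ℚ) * (y.val : ℚ) / (N : ℚ) : ℚ) : AddCircle (1 : ℚ))

/-- The set defining `nonResidue p` is nonempty for odd `p`, so `nonResidue p` is not the junk
value `sInf ∅ = 0`; all that matters below is that it is prime to `p`. -/
lemma nonResidue_not_dvd (p : ℕ) (hp : p.Prime) (hodd : p ≠ 2) : ¬ p ∣ nonResidue p := by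
  have : Fact p.Prime := ⟨hp⟩
  have hne : {n : ℕ | 2 ≤ n ∧ n ≤ p - 1 ∧ ¬ IsSquare (n : ZMod p)}.Nonempty := by
    obtain ⟨x, hx⟩ := FiniteField.exists_nonsquare (F := ZMod p) (by rwa [ZMod.ringChar_zmod_n])
    have hcast : ((x.val : ℕ) : ZMod p) = x := ZMod.natCast_zmod_val x
    refine ⟨x.val, ?_, ?_, by rwa [hcast]⟩
    · by_contra! h
      apply hx
      rw [← hcast]
      interval_cases x.val <;> simp
    · have := ZMod.val_lt x
      omega
  obtain ⟨h2, hle, -⟩ := Nat.sInf_mem hne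
  change 2 ≤ nonResidue p at h2
  change nonResidue p ≤ p - 1 at hle
  intro h
  have := Nat.le_of_dvd (by omega) h
  omega

/-- Every integer prime to `p` is a sum of two squares modulo `p ^ (k + 1)`. The condition
`¬ p ∣ a` is carried along because it is what makes the solution lift. -/
lemma exists_sq_add_sq_of_not_dvd (p : ℕ) (hp : p.Prime) (hodd : p ≠ 2) (m : ℤ)
    (hm : ¬ (p : ℤ) ∣ m) (k : ℕ) :
    ∃ a b : ℤ, ¬ (p : ℤ) ∣ a ∧ (p : ℤ) ^ (k + 1) ∣ a ^ 2 + b ^ 2 - m := by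
  have : Fact p.Prime := ⟨hp⟩
  have hpZ : Prime (p : ℤ) := Nat.prime_iff_prime_int.mp hp
  induction k with
  | zero =>
    obtain ⟨x, y, hxy⟩ := ZMod.sq_add_sq p (m : ZMod p)
    obtain ⟨a, rfl⟩ := ZMod.intCast_surjective x
    obtain ⟨b, rfl⟩ := ZMod.intCast_surjective y
    have hd : (p : ℤ) ∣ a ^ 2 + b ^ 2 - m := by
      rw [← ZMod.intCast_zmod_eq_zero_iff_dvd _ p]
      push_cast
      rw [hxy, sub_self]
    by_cases ha : (p : ℤ) ∣ a
    · refine ⟨b, a, fun hb => hm ?_, by simpa [add_comm] using hd⟩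
      have h := dvd_sub (dvd_add (dvd_pow ha two_ne_zero) (dvd_pow hb two_ne_zero)) hd
      rwa [sub_sub_cancel] at h
    · exact ⟨a, b, ha, by simpa using hd⟩
  | succ k ih =>
    obtain ⟨a, b, ha, c, hc⟩ := ih
    have h2 : ¬ (p : ℤ) ∣ 2 := by
      intro h
      exact hodd ((Nat.prime_dvd_prime_iff_eq hp Nat.prime_two).mp (by exact_mod_cast h))
    have hcop : IsCoprime (2 * a) (p : ℤ) :=
      ((hpZ.irreducible.coprime_iff_not_dvd).mpr (hpZ.not_dvd_mul h2 ha)).symm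
    obtain ⟨u, v, huv⟩ := hcop
    -- Newton step: `-c * u` solves `c + 2 * a * t ≡ 0` modulo `p`.
    refine ⟨a + p ^ (k + 1) * (-c * u), b, ?_, c * v + p ^ k * (c * u) ^ 2, ?_⟩
    · rw [pow_succ']
      intro h
      apply ha
      rw [mul_assoc] at h
      exact (dvd_add_left (dvd_mul_right _ _)).mp h
    · linear_combination hc - p ^ (k + 1) * c * huv

/-- The sum of two pairings only depends on the integral numerator modulo `N`. -/
lemma cyclicPairing_add_eq (N : ℕ) (hN : N ≠ 0) (s t : ℤ) (a b c d a' b' c' d' : ZMod N)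
    (h : (s : ZMod N) * (a * b + c * d) = t * (a' * b' + c' * d')) :
    cyclicPairing N s a b + cyclicPairing N s c d =
      cyclicPairing N t a' b' + cyclicPairing N t c' d' := by
  have : NeZero N := ⟨hN⟩
  have hdvd : (N : ℤ) ∣ s * (a.val * b.val + c.val * d.val) -
      t * (a'.val * b'.val + c'.val * d'.val) := by
    rw [← ZMod.intCast_zmod_eq_zero_iff_dvd _ N]
    push_cast
    simp only [ZMod.natCast_zmod_val]
    rw [h, sub_self]
  obtain ⟨z, hz⟩ := hdvd
  have hzQ : (s : ℚ) * (a.val * b.val + c.val * d.val) -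
      t * (a'.val * b'.val + c'.val * d'.val) = N * z := by exact_mod_cast hz
  have hNQ : (N : ℚ) ≠ 0 := by exact_mod_cast hN
  unfold cyclicPairing
  rw [← AddCircle.coe_add, ← AddCircle.coe_add, ← sub_eq_zero, ← AddCircle.coe_sub,
    AddCircle.coe_eq_zero_iff]
  refine ⟨z, ?_⟩
  rw [zsmul_eq_mul, mul_one]
  field_simp
  linear_combination -hzQ

/-- The similitude with matrix `!![a, b; -b, a]`, invertible when `a ^ 2 + b ^ 2` has inverse
`n`. -/
def similitude {R : Type*} [CommRing R] (n a b : R) (h : n * (a ^ 2 + b ^ 2) = 1) :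
    (R × R) ≃+ (R × R) where
  toFun v := (a * v.1 + b * v.2, -b * v.1 + a * v.2)
  invFun w := (n * (a * w.1 - b * w.2), n * (b * w.1 + a * w.2))
  left_inv v := by
    ext
    · linear_combination v.1 * h
    · linear_combination v.2 * h
  right_inv w := by
    ext
    · linear_combination w.1 * h
    · linear_combination w.2 * h
  map_add' v w := by
    ext <;> simp only [Prod.fst_add, Prod.snd_add] <;> ring

/-- For an odd prime `p` and `k ≥ 1`, the orthogonal sum of two copies of
the linking pairing `[p^k, n(p)]` is isomorphic to the orthogonal sum of two copies of
`[p^k, 1]`. -/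
theorem stmt7 (p : ℕ) (hp : p.Prime) (hodd : p ≠ 2) (k : ℕ) (hk : 1 ≤ k) :
    ∃ φ : (ZMod (p ^ k) × ZMod (p ^ k)) ≃+ (ZMod (p ^ k) × ZMod (p ^ k)),
      ∀ a b : ZMod (p ^ k) × ZMod (p ^ k),
        cyclicPairing (p ^ k) 1 a.1 b.1 + cyclicPairing (p ^ k) 1 a.2 b.2 =
          cyclicPairing (p ^ k) (nonResidue p) (φ a).1 (φ b).1 +
            cyclicPairing (p ^ k) (nonResidue p) (φ a).2 (φ b).2 := by
  have hpZ : Prime (p : ℤ) := Nat.prime_iff_prime_int.mp hp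
  have hn : ¬ (p : ℤ) ∣ (nonResidue p : ℤ) := by
    exact_mod_cast nonResidue_not_dvd p hp hodd
  -- `u` inverts `n(p)` modulo `p ^ k`.
  obtain ⟨u, v, huv⟩ : IsCoprime (nonResidue p : ℤ) ((p : ℤ) ^ k) :=
    ((hpZ.irreducible.coprime_iff_not_dvd).mpr hn).symm.pow_right
  have hu : ¬ (p : ℤ) ∣ u := fun h => hpZ.not_isUnit <| isUnit_of_dvd_one <| huv ▸
    dvd_add (h.mul_right _) ((dvd_pow_self _ (by omega)).mul_left _)
  obtain ⟨a, b, -, hab⟩ := exists_sq_add_sq_of_not_dvd p hp hodd u hu (k - 1)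
  rw [Nat.sub_add_cancel hk] at hab
  obtain ⟨c, hc⟩ := hab
  have hp0 : (p : ZMod (p ^ k)) ^ k = 0 := by
    exact_mod_cast ZMod.natCast_self (p ^ k)
  have h1 : (nonResidue p : ZMod (p ^ k)) * ((a : ZMod (p ^ k)) ^ 2 + (b : ZMod (p ^ k)) ^ 2)
      = 1 := by
    have e1 := congrArg (Int.cast : ℤ → ZMod (p ^ k)) huv
    have e2 := congrArg (Int.cast : ℤ → ZMod (p ^ k)) hc
    push_cast at e1 e2
    linear_combination e1 + nonResidue p * e2 + (nonResidue p * c - v) * hp0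
  refine ⟨similitude _ _ _ h1, fun x y => ?_⟩
  apply cyclicPairing_add_eq _ (pow_ne_zero _ hp.ne_zero)
  simp only [similitude, AddEquiv.coe_mk, Equiv.coe_fn_mk]
  push_cast
  linear_combination -(x.1 * y.1 + x.2 * y.2) * h1
end

section
/- Let G be a finite abelian 2-group equipped with a nondegenerate symmetric biadditive pairing B : G × G → ℚ/ℤ. Then there exist integers r, s ≥ 0, integers k₁, …, k_r ≥ 1, integers l₁, …, l_s ≥ 1, and n₁, …, n_s ∈ {−3, −1, 1, 3} such that the orthogonal sum of (G, B) with A^{k₁}(1) ⊥ … ⊥ A^{k_r}(1) is isomorphic, as a linking pairing, to the orthogonal sum A^{l₁}(n₁) ⊥ … ⊥ A^{l_s}(n_s). -/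
/-! ### Cyclic groups inside `ℚ/ℤ` -/

/-- The embedding `ℤ/N → ℚ/ℤ`, `m ↦ m / N`. -/
noncomputable def divHom (N : ℕ) [NeZero N] : ZMod N →+ AddCircle (1 : ℚ) :=
  ZMod.lift N ⟨zmultiplesHom _ (((1 / N : ℚ)) : AddCircle (1 : ℚ)), by
    have hN : (N : ℚ) ≠ 0 := NeZero.ne _
    rw [zmultiplesHom_apply, ← AddCircle.coe_zsmul, AddCircle.coe_eq_zero_iff]
    exact ⟨1, by simp [hN]⟩⟩

lemma divHom_intCast (N : ℕ) [NeZero N] (m : ℤ) :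
    divHom N (m : ZMod N) = ((m / N : ℚ) : AddCircle (1 : ℚ)) := by
  rw [divHom, ZMod.lift_coe, zmultiplesHom_apply, ← AddCircle.coe_zsmul]
  congr 1
  simp [div_eq_mul_inv]

lemma divHom_eq_zero (N : ℕ) [NeZero N] {a : ZMod N} (h : divHom N a = 0) : a = 0 := by
  obtain ⟨m, rfl⟩ := ZMod.intCast_surjective a
  rw [divHom_intCast, AddCircle.coe_eq_zero_iff] at h
  obtain ⟨n, hn⟩ := h
  have hN : (N : ℚ) ≠ 0 := NeZero.ne _
  rw [ZMod.intCast_zmod_eq_zero_iff_dvd]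
  refine ⟨n, ?_⟩
  field_simp at hn
  simp only [zsmul_eq_mul, mul_one] at hn
  have h2 : ((m : ℤ) : ℚ) = ((N * n : ℤ) : ℚ) := by push_cast; linarith
  exact_mod_cast h2

/-- The `N`-torsion of `ℚ/ℤ` is the image of `ℤ/N`. -/
lemma exists_divHom (N : ℕ) [NeZero N] {b : AddCircle (1 : ℚ)} (h : N • b = 0) :
    ∃ m : ℤ, b = divHom N (m : ZMod N) := by
  induction b using QuotientAddGroup.induction_on with
  | H q =>
    have hN : (N : ℚ) ≠ 0 := NeZero.ne _
    change N • ((q : ℚ) : AddCircle (1 : ℚ)) = 0 at h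
    rw [← AddCircle.coe_nsmul, AddCircle.coe_eq_zero_iff] at h
    obtain ⟨m, hm⟩ := h
    refine ⟨m, ?_⟩
    rw [divHom_intCast]
    change ((q : ℚ) : AddCircle (1 : ℚ)) = _
    congr 1
    simp only [zsmul_eq_mul, mul_one, nsmul_eq_mul] at hm
    field_simp
    linarith

/-- The pairing `A^k(n)` as a biadditive map. -/
noncomputable def cycHom (k : ℕ) (n : ℤ) :
    ZMod (2 ^ k) →+ ZMod (2 ^ k) →+ AddCircle (1 : ℚ) :=
  (AddMonoidHom.mul.comp (AddMonoidHom.mulLeft (n : ZMod (2 ^ k)))).compr₂ (divHom (2 ^ k))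

lemma cycHom_apply (k : ℕ) (n : ℤ) (x y : ZMod (2 ^ k)) :
    cycHom k n x y = divHom (2 ^ k) (n * x * y) := rfl

lemma cycHom_eq (k : ℕ) (n : ℤ) (x y : ZMod (2 ^ k)) :
    cycHom k n x y = cyclicPairing (2 ^ k) n x y := by
  have h : (n * x * y : ZMod (2 ^ k)) = ((n * (x.val : ℤ) * (y.val : ℤ) : ℤ) : ZMod (2 ^ k)) := by
    push_cast
    simp
  rw [cycHom_apply, h, divHom_intCast, cyclicPairing]
  push_cast
  rfl

/-! ### Linking pairings and stable diagonalizability -/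

/-- The orthogonal sum of two pairings. -/
def orthSum {G H : Type} [AddCommGroup G] [AddCommGroup H]
    (B : G →+ G →+ AddCircle (1 : ℚ)) (C : H →+ H →+ AddCircle (1 : ℚ)) :
    (G × H) →+ (G × H) →+ AddCircle (1 : ℚ) :=
  (B.comp (AddMonoidHom.fst G H)).compl₂ (AddMonoidHom.fst G H) +
    (C.comp (AddMonoidHom.snd G H)).compl₂ (AddMonoidHom.snd G H)

lemma orthSum_apply {G H : Type} [AddCommGroup G] [AddCommGroup H]
    (B : G →+ G →+ AddCircle (1 : ℚ)) (C : H →+ H →+ AddCircle (1 : ℚ)) (a b : G × H) :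
    orthSum B C a b = B a.1 b.1 + C a.2 b.2 := rfl

/-- The restriction of a pairing to a subgroup. -/
def restr {G : Type} [AddCommGroup G] (B : G →+ G →+ AddCircle (1 : ℚ)) (H : AddSubgroup G) :
    H →+ H →+ AddCircle (1 : ℚ) :=
  (B.comp H.subtype).compl₂ H.subtype

lemma restr_apply {G : Type} [AddCommGroup G] (B : G →+ G →+ AddCircle (1 : ℚ))
    (H : AddSubgroup G) (a b : H) : restr B H a b = B a b := rfl

/-- A nondegenerate symmetric pairing on a finite abelian `2`-group. -/
structure IsLinking {G : Type} [AddCommGroup G] (B : G →+ G →+ AddCircle (1 : ℚ)) : Prop where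
  finite : Finite G
  two_group : ∀ x : G, ∃ n : ℕ, 2 ^ n • x = 0
  symm : ∀ x y, B x y = B y x
  nondeg : ∀ x, (∀ y, B x y = 0) → x = 0

/-- The pairing becomes diagonal, with entries in `{-3, -1, 1, 3}`, after adding finitely many
summands `A^k(1)`. -/
def StablyDiagonal {G : Type} [AddCommGroup G] (B : G →+ G →+ AddCircle (1 : ℚ)) : Prop :=
  ∃ (r s : ℕ) (k : Fin r → ℕ) (l : Fin s → ℕ) (n : Fin s → ℤ),
    (∀ i, 1 ≤ k i) ∧ (∀ j, 1 ≤ l j) ∧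
    (∀ j, n j = -3 ∨ n j = -1 ∨ n j = 1 ∨ n j = 3) ∧
    ∃ φ : (G × ∀ i : Fin r, ZMod (2 ^ k i)) ≃+ (∀ j : Fin s, ZMod (2 ^ l j)),
      ∀ a b : G × ∀ i : Fin r, ZMod (2 ^ k i),
        B a.1 b.1 + ∑ i : Fin r, cycHom (k i) 1 (a.2 i) (b.2 i) =
          ∑ j : Fin s, cycHom (l j) (n j) (φ a j) (φ b j)

/-- `Fin.consEquiv` as an additive equivalence. -/
def consAddEquiv {m : ℕ} (α : Fin (m + 1) → Type) [∀ i, AddCommGroup (α i)] :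
    (α 0 × ∀ i : Fin m, α i.succ) ≃+ ∀ i, α i where
  __ := Fin.consEquiv α
  map_add' a b := by
    funext i
    refine Fin.cases ?_ (fun i => ?_) i <;> rfl

lemma StablyDiagonal.of_subsingleton {G : Type} [AddCommGroup G] [Subsingleton G]
    (B : G →+ G →+ AddCircle (1 : ℚ)) : StablyDiagonal B := by
  refine ⟨0, 0, Fin.elim0, Fin.elim0, Fin.elim0, fun i => i.elim0, fun i => i.elim0,
    fun i => i.elim0, AddEquiv.ofBijective (0 : _ →+ _)
      ⟨fun _ _ _ => Subsingleton.elim _ _, fun y => ⟨0, Subsingleton.elim _ _⟩⟩, fun a b => ?_⟩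
  simp [Subsingleton.elim a.1 0]

/-- Stable diagonalizability is inherited from the complement of a rank one summand. -/
lemma StablyDiagonal.of_equiv {G H : Type} [AddCommGroup G] [AddCommGroup H]
    {B : G →+ G →+ AddCircle (1 : ℚ)} {C : H →+ H →+ AddCircle (1 : ℚ)}
    {k : ℕ} (hk : 1 ≤ k) {n : ℤ} (hn : n = -3 ∨ n = -1 ∨ n = 1 ∨ n = 3)
    (e : (ZMod (2 ^ k) × H) ≃+ G)
    (he : ∀ a b, B (e a) (e b) = cycHom k n a.1 b.1 + C a.2 b.2)
    (hC : StablyDiagonal C) : StablyDiagonal B := by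
  obtain ⟨r, s, ks, l, ns, hks, hl, hns, φ, hφ⟩ := hC
  let Φ := (e.symm.prodCongr (AddEquiv.refl (∀ i, ZMod (2 ^ ks i)))).trans
    (AddEquiv.prodAssoc.trans (((AddEquiv.refl _).prodCongr φ).trans
      (consAddEquiv (fun j => ZMod (2 ^ (Fin.cons k l : Fin (s + 1) → ℕ) j)))))
  have hΦ : ∀ z p, Φ (e z, p) =
      consAddEquiv (fun j => ZMod (2 ^ (Fin.cons k l : Fin (s + 1) → ℕ) j))
        (z.1, φ (z.2, p)) := by
    intro z p
    change consAddEquiv (fun j => ZMod (2 ^ (Fin.cons k l : Fin (s + 1) → ℕ) j)) ((e.symm (e z)).1, φ ((e.symm (e z)).2, p)) = _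
    rw [e.symm_apply_apply]
  refine ⟨r, s + 1, ks, Fin.cons k l, Fin.cons n ns, hks, Fin.cases hk hl, Fin.cases hn hns,
    Φ, ?_⟩
  rintro ⟨a, p⟩ ⟨b, q⟩
  obtain ⟨a, rfl⟩ := e.surjective a
  obtain ⟨b, rfl⟩ := e.surjective b
  rw [hΦ, hΦ, he, Fin.sum_univ_succ, add_assoc, hφ (a.2, p) (b.2, q)]
  rfl

lemma StablyDiagonal.of_orthSum {G : Type} [AddCommGroup G]
    {B : G →+ G →+ AddCircle (1 : ℚ)} {k : ℕ} (hk : 1 ≤ k)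
    (h : StablyDiagonal (orthSum B (cycHom k 1))) : StablyDiagonal B := by
  obtain ⟨r, s, ks, l, ns, hks, hl, hns, φ, hφ⟩ := h
  refine ⟨r + 1, s, Fin.cons k ks, l, ns, Fin.cases hk hks, hl, hns,
    ((AddEquiv.refl _).prodCongr
      (consAddEquiv (fun j => ZMod (2 ^ (Fin.cons k ks : Fin (r + 1) → ℕ) j))).symm).trans
      (AddEquiv.prodAssoc.symm.trans φ), ?_⟩
  rintro ⟨a, p⟩ ⟨b, q⟩
  have := hφ ((a, p 0), fun i => p i.succ) ((b, q 0), fun i => q i.succ)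
  rw [orthSum_apply] at this
  rw [Fin.sum_univ_succ, ← add_assoc]
  exact this

/-! ### Odd integers modulo powers of two -/

/-- An odd integer is, up to a square factor modulo `2 ^ k`, one of `±1, ±3`. -/
lemma exists_sq_mul_modEq {u : ℤ} (hu : Odd u) (k : ℕ) :
    ∃ n t : ℤ, (n = -3 ∨ n = -1 ∨ n = 1 ∨ n = 3) ∧ (2 : ℤ) ^ k ∣ t ^ 2 * u - n := by
  obtain ⟨n, hn, h8⟩ : ∃ n : ℤ, (n = -3 ∨ n = -1 ∨ n = 1 ∨ n = 3) ∧ 8 ∣ u - n := by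
    obtain ⟨v, rfl⟩ := hu
    have : v % 4 = 0 ∨ v % 4 = 1 ∨ v % 4 = 2 ∨ v % 4 = 3 := by omega
    rcases this with h | h | h | h
    · exact ⟨1, by simp, by omega⟩
    · exact ⟨3, by simp, by omega⟩
    · exact ⟨-3, by simp, by omega⟩
    · exact ⟨-1, by simp, by omega⟩
  have key : ∀ j : ℕ, ∃ t : ℤ, Odd t ∧ (2 : ℤ) ^ (j + 3) ∣ t ^ 2 * u - n := by
    intro j
    induction j with
    | zero => exact ⟨1, odd_one, by simpa using h8⟩
    | succ j ih =>
      obtain ⟨t, ht, c, hc⟩ := ih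
      rcases Int.even_or_odd c with ⟨d, hd⟩ | hodd
      · exact ⟨t, ht, d, by rw [hc, hd]; ring⟩
      -- an odd error term is corrected by the cross term of `(t + 2 ^ (j + 2)) ^ 2`
      · obtain ⟨d, hd⟩ := hodd.add_odd (ht.mul hu)
        refine ⟨t + 2 ^ (j + 2), ht.add_even ⟨2 ^ (j + 1), by ring⟩, d + 2 ^ j * u, ?_⟩
        have : (t + 2 ^ (j + 2)) ^ 2 * u - n
            = (t ^ 2 * u - n) + 2 ^ (j + 3) * (t * u) + 2 ^ (j + 2) * 2 ^ (j + 2) * u := by ring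
        rw [this, hc, ← mul_add, hd]
        ring
  obtain ⟨t, -, ht⟩ := key k
  exact ⟨n, t, hn, (pow_dvd_pow 2 (by omega)).trans ht⟩

lemma exists_inv_of_odd {n : ℤ} (hn : Odd n) (k : ℕ) :
    ∃ m : ℤ, (n * m : ZMod (2 ^ k)) = 1 := by
  have h : IsCoprime n ((2 : ℤ) ^ k) := by
    obtain ⟨v, rfl⟩ := hn
    exact IsCoprime.pow_right ⟨1, -v, by ring⟩
  obtain ⟨a, b, hab⟩ := h
  refine ⟨a, ?_⟩
  have := congrArg (Int.cast : ℤ → ZMod (2 ^ k)) hab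
  have h0 : ((2 : ZMod (2 ^ k)) ^ k) = 0 := by exact_mod_cast ZMod.natCast_self (2 ^ k)
  push_cast at this
  rw [h0, mul_zero, add_zero] at this
  rw [mul_comm, this]

/-! ### Splitting off a rank one summand -/

lemma divHom_mul (N : ℕ) [NeZero N] (m : ℤ) (a : ZMod N) :
    divHom N (m * a) = m • divHom N a := by
  rw [← map_zsmul, zsmul_eq_mul]

lemma exists_pairing_eq {G : Type} [AddCommGroup G] (B : G →+ G →+ AddCircle (1 : ℚ)) {k : ℕ}
    {x : G} (hx : 2 ^ k • x = 0) (y : G) : ∃ m : ℤ, B x y = divHom (2 ^ k) m := by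
  refine exists_divHom (2 ^ k) ?_
  rw [← AddMonoidHom.nsmul_apply, ← map_nsmul, hx, map_zero, AddMonoidHom.zero_apply]

/-- A vector `x` killed by `2 ^ k` with `B x x = u / 2 ^ k`, `u` odd, spans an orthogonal direct
summand. Rescaling `x` puts the entry into `{-3, -1, 1, 3}`. -/
lemma exists_split {G : Type} [AddCommGroup G] {B : G →+ G →+ AddCircle (1 : ℚ)}
    (hB : IsLinking B) {k : ℕ} {x : G} (hx : 2 ^ k • x = 0) {u : ℤ} (hu : Odd u)
    (hxx : B x x = divHom (2 ^ k) u) :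
    ∃ n : ℤ, (n = -3 ∨ n = -1 ∨ n = 1 ∨ n = 3) ∧
      ∃ e : (ZMod (2 ^ k) × (B x).ker) ≃+ G,
        ∀ a b, B (e a) (e b) = cycHom k n a.1 b.1 + restr B (B x).ker a.2 b.2 := by
  obtain ⟨n, t, hn, c, hc⟩ := exists_sq_mul_modEq hu k
  have hn_odd : Odd n := by rcases hn with rfl | rfl | rfl | rfl <;> decide
  obtain ⟨m, hm⟩ := exists_inv_of_odd hn_odd k
  have h0 : ((2 : ZMod (2 ^ k)) ^ k) = 0 := by exact_mod_cast ZMod.natCast_self (2 ^ k)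
  have hcast : (t ^ 2 * u : ZMod (2 ^ k)) = n := by
    have := congrArg (Int.cast : ℤ → ZMod (2 ^ k)) hc
    push_cast at this
    rw [h0, zero_mul] at this
    exact sub_eq_zero.mp this
  let θ : ZMod (2 ^ k) →+ G := ZMod.lift (2 ^ k) ⟨zmultiplesHom G (t • x), by
    rw [zmultiplesHom_apply, smul_comm, natCast_zsmul, hx, smul_zero]⟩
  have hθ : ∀ z : ℤ, θ z = z • t • x := fun z => by
    rw [ZMod.lift_coe, zmultiplesHom_apply]
  have hxθ : ∀ c, B x (θ c) = divHom (2 ^ k) (t * u * c) := fun c => by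
    obtain ⟨z, rfl⟩ := ZMod.intCast_surjective c
    rw [hθ, map_zsmul, map_zsmul, hxx, ← divHom_mul, ← divHom_mul]
    congr 1
    ring
  have hθker : ∀ c (h : (B x).ker), B (θ c) h = 0 := fun c h => by
    obtain ⟨z, rfl⟩ := ZMod.intCast_surjective c
    have hh : B x h = 0 := h.2
    rw [hθ, map_zsmul, map_zsmul, AddMonoidHom.zsmul_apply, AddMonoidHom.zsmul_apply, hh,
      smul_zero, smul_zero]
  have hθθ : ∀ c d, B (θ c) (θ d) = divHom (2 ^ k) (n * c * d) := fun c d => by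
    obtain ⟨z, rfl⟩ := ZMod.intCast_surjective c
    rw [hθ, map_zsmul, map_zsmul, AddMonoidHom.zsmul_apply, AddMonoidHom.zsmul_apply, hxθ,
      ← divHom_mul, ← divHom_mul, ← hcast]
    congr 1
    ring
  let ψ : ZMod (2 ^ k) × (B x).ker →+ G := θ.coprod (B x).ker.subtype
  have hψ : ∀ a, ψ a = θ a.1 + a.2 := fun a => rfl
  have hinj : Function.Injective ψ := by
    rw [injective_iff_map_eq_zero]
    rintro ⟨c, h⟩ h0
    rw [hψ] at h0
    have h1 : B (θ 1) (θ c + h) = 0 := by rw [h0, map_zero]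
    rw [map_add, hθker, add_zero, hθθ, mul_one] at h1
    have h2 : c = 0 := by
      rw [← one_mul c, ← hm, mul_right_comm, divHom_eq_zero _ h1, zero_mul]
    subst h2
    rw [map_zero, zero_add] at h0
    exact Prod.ext rfl (Subtype.ext h0)
  have hsurj : Function.Surjective ψ := by
    intro y
    obtain ⟨a, ha⟩ := exists_pairing_eq B hx y
    -- the coefficient solves `t * u * c = a`, because `t ^ 2 * u * m = n * m = 1`
    refine ⟨(t * m * a, ⟨y - θ (t * m * a), ?_⟩), ?_⟩
    · rw [AddMonoidHom.mem_ker, map_sub, hxθ, ha, ← map_sub]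
      have : (t * u * (t * m * a) : ZMod (2 ^ k)) = a := by
        linear_combination (m * a : ZMod (2 ^ k)) * hcast + (a : ZMod (2 ^ k)) * hm
      rw [this, sub_self, map_zero]
    · rw [hψ]
      simp
  refine ⟨n, hn, AddEquiv.ofBijective ψ ⟨hinj, hsurj⟩, fun a b => ?_⟩
  change B (ψ a) (ψ b) = _
  rw [hψ, hψ, map_add, map_add, AddMonoidHom.add_apply, AddMonoidHom.add_apply, hθθ, hθker,
    hB.symm a.2, hθker, cycHom_apply, restr_apply, add_zero, zero_add]

lemma IsLinking.orthSum {G : Type} [AddCommGroup G] {B : G →+ G →+ AddCircle (1 : ℚ)}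
    (hB : IsLinking B) (k : ℕ) : IsLinking (orthSum B (cycHom k 1)) := by
  have := hB.finite
  refine ⟨inferInstance, fun ⟨x, c⟩ => ?_, fun a b => ?_, fun ⟨x, c⟩ h => ?_⟩
  · obtain ⟨n, hn⟩ := hB.two_group x
    refine ⟨n + k, Prod.ext ?_ ?_⟩
    · rw [Prod.smul_fst, pow_add, mul_comm, mul_smul, hn, smul_zero]; rfl
    · have h0 : ((2 : ZMod (2 ^ k)) ^ k) = 0 := by exact_mod_cast ZMod.natCast_self (2 ^ k)
      rw [Prod.smul_snd, nsmul_eq_mul]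
      push_cast
      rw [pow_add, h0]
      simp
  · rw [orthSum_apply, orthSum_apply, hB.symm, cycHom_apply, cycHom_apply, mul_right_comm]
  · have h1 : x = 0 := hB.nondeg x fun y => by simpa [orthSum_apply] using h (y, 0)
    have h2 : c = 0 := divHom_eq_zero _ (by simpa [orthSum_apply, cycHom_apply] using h (0, 1))
    rw [h1, h2]; rfl

/-- The complement of an orthogonal summand is nondegenerate. -/
lemma IsLinking.restr {G : Type} [AddCommGroup G] {B : G →+ G →+ AddCircle (1 : ℚ)}
    (hB : IsLinking B) {k : ℕ} {n : ℤ} {x : G} (e : (ZMod (2 ^ k) × (B x).ker) ≃+ G)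
    (he : ∀ a b, B (e a) (e b) = cycHom k n a.1 b.1 + restr B (B x).ker a.2 b.2) :
    IsLinking (restr B (B x).ker) := by
  have := hB.finite
  refine ⟨inferInstance, fun y => ?_, fun a b => hB.symm _ _, fun h hh => ?_⟩
  · exact (hB.two_group y).imp fun n hn => Subtype.ext hn
  · have : e (0, h) = 0 := hB.nondeg _ fun y => by
      obtain ⟨b, rfl⟩ := e.surjective y
      rw [he]
      simp [hh]
    simpa using this

lemma card_split {G : Type} [AddCommGroup G] {B : G →+ G →+ AddCircle (1 : ℚ)} {k : ℕ} {x : G}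
    (e : (ZMod (2 ^ k) × (B x).ker) ≃+ G) : Nat.card G = 2 ^ k * Nat.card (B x).ker := by
  rw [← Nat.card_congr e.toEquiv, Nat.card_prod, Nat.card_zmod]

/-! ### The induction -/

/-- If `2 ^ k` is the exponent of `G`, the value `1 / 2 ^ k` is attained by the pairing: `x` is an
element of maximal order, and `y` detects the nonzero element `2 ^ (k - 1) • x`. -/
lemma IsLinking.exists_dual_pair {G : Type} [AddCommGroup G]
    {B : G →+ G →+ AddCircle (1 : ℚ)} (hB : IsLinking B) (hG : Nontrivial G) :
    ∃ k ≥ 1, (∀ z : G, 2 ^ k • z = 0) ∧ ∃ x y : G, B x y = divHom (2 ^ k) 1 := by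
  have := hB.finite
  have hord : ∀ z : G, ∃ n, addOrderOf z = 2 ^ n := fun z => by
    obtain ⟨n, hn⟩ := hB.two_group z
    obtain ⟨m, -, hm⟩ := (Nat.dvd_prime_pow Nat.prime_two).mp (addOrderOf_dvd_of_nsmul_eq_zero hn)
    exact ⟨m, hm⟩
  obtain ⟨x, hx⟩ := Finite.exists_max (fun z : G => addOrderOf z)
  obtain ⟨k, hk⟩ := hord x
  have hall : ∀ z : G, 2 ^ k • z = 0 := fun z => by
    obtain ⟨n, hn⟩ := hord z
    have := hx z
    rw [hk, hn] at this
    rw [← addOrderOf_dvd_iff_nsmul_eq_zero, hn]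
    exact pow_dvd_pow 2 ((Nat.pow_le_pow_iff_right one_lt_two).mp this)
  have hk1 : 1 ≤ k := by
    by_contra! h
    obtain rfl : k = 0 := by omega
    obtain ⟨z, hz⟩ := exists_ne (0 : G)
    exact hz (by simpa using hall z)
  refine ⟨k, hk1, hall, x, ?_⟩
  obtain ⟨y, hy⟩ : ∃ y, B (2 ^ (k - 1) • x) y ≠ 0 := by
    by_contra! h
    have h1 := addOrderOf_dvd_of_nsmul_eq_zero (hB.nondeg _ h)
    rw [hk, Nat.pow_dvd_pow_iff_le_right one_lt_two] at h1
    omega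
  obtain ⟨m, hm⟩ := exists_pairing_eq B (hall x) y
  have hm_odd : Odd m := by
    by_contra h
    obtain ⟨v, rfl⟩ := Int.not_odd_iff_even.mp h
    refine hy ?_
    have h0 : ((2 : ZMod (2 ^ k)) ^ k) = 0 := by exact_mod_cast ZMod.natCast_self (2 ^ k)
    rw [map_nsmul, AddMonoidHom.nsmul_apply, hm, ← map_nsmul, nsmul_eq_mul]
    have : (((2 ^ (k - 1) : ℕ) : ZMod (2 ^ k)) * ((v + v : ℤ) : ZMod (2 ^ k))) =
        2 ^ (k - 1 + 1) * v := by push_cast; ring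
    rw [this, Nat.sub_add_cancel hk1, h0, zero_mul, map_zero]
  obtain ⟨a, ha⟩ := exists_inv_of_odd hm_odd k
  refine ⟨a • y, ?_⟩
  rw [map_zsmul, hm, ← divHom_mul, mul_comm, ha]

theorem stablyDiagonal_of_card (N : ℕ) :
    ∀ {G : Type} [AddCommGroup G] {B : G →+ G →+ AddCircle (1 : ℚ)},
      IsLinking B → Nat.card G = N → StablyDiagonal B := by
  induction N using Nat.strong_induction_on with
  | _ N ih =>
  intro G _ B hB hN
  rcases subsingleton_or_nontrivial G with hG | hG
  · exact .of_subsingleton B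
  have := hB.finite
  obtain ⟨k, hk, hall, x, y, hxy⟩ := hB.exists_dual_pair hG
  have h2k : 1 < 2 ^ k := Nat.one_lt_two_pow (by omega)
  have hsplit : ∀ {z : G} {u : ℤ}, Odd u → B z z = divHom (2 ^ k) u → StablyDiagonal B := by
    intro z u hu hz
    obtain ⟨n, hn, e, he⟩ := exists_split hB (hall z) hu hz
    have hc := card_split e
    have hpos : 0 < Nat.card (B z).ker := Nat.card_pos
    exact .of_equiv hk hn e he (ih _ (by nlinarith) (hB.restr e he) rfl)
  obtain ⟨u, hu⟩ := exists_pairing_eq B (hall x) x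
  obtain ⟨v, hv⟩ := exists_pairing_eq B (hall y) y
  rcases Int.even_or_odd u with hu2 | hu2
  swap
  · exact hsplit hu2 hu
  rcases Int.even_or_odd v with hv2 | hv2
  swap
  · exact hsplit hv2 hv
  -- After adding a generator `e` of `A^k(1)`, the orthogonal vectors `x + e` and `y - e` have odd
  -- squares; splitting both off leaves a group smaller than `G`.
  refine .of_orthSum hk ?_
  have hC := hB.orthSum k
  set C := _root_.orthSum B (cycHom k 1) with hCdef
  have hkill : ∀ w : G × ZMod (2 ^ k), 2 ^ k • w = 0 := fun w => by
    have h0 : ((2 : ZMod (2 ^ k)) ^ k) = 0 := by exact_mod_cast ZMod.natCast_self (2 ^ k)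
    refine Prod.ext (hall _) ?_
    rw [Prod.smul_snd, nsmul_eq_mul]
    push_cast
    rw [h0, zero_mul]
    rfl
  have hw : C (x, 1) (x, 1) = divHom (2 ^ k) (u + 1 : ℤ) := by
    rw [hCdef, orthSum_apply, cycHom_apply, hu, ← map_add]
    simp
  have hz : C (y, -1) (y, -1) = divHom (2 ^ k) (v + 1 : ℤ) := by
    rw [hCdef, orthSum_apply, cycHom_apply, hv, ← map_add]
    simp
  have hwz : C (x, 1) (y, -1) = 0 := by
    rw [hCdef, orthSum_apply, cycHom_apply, hxy, ← map_add]
    simp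
  obtain ⟨n, hn, e, he⟩ := exists_split hC (hkill _) hu2.add_one hw
  have hD := hC.restr e he
  have hc := card_split e
  obtain ⟨n', hn', e', he'⟩ := exists_split (x := ⟨(y, -1), hwz⟩) hD
    (Subtype.ext (hkill _)) hv2.add_one hz
  have hc' := card_split e'
  refine .of_equiv hk hn e he (.of_equiv hk hn' e' he' (ih _ ?_ (hD.restr e' he') rfl))
  rw [Nat.card_prod, Nat.card_zmod, hc', mul_comm] at hc
  have h1 := Nat.eq_of_mul_eq_mul_left (by omega) hc
  rw [← hN, h1]
  exact lt_mul_of_one_lt_left Nat.card_pos h2k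

/-- For a finite abelian 2-group `G` with a nondegenerate symmetric
biadditive pairing `B`, the orthogonal sum of `(G, B)` with finitely many copies
`A^{kᵢ}(1)` is isomorphic as a linking pairing to an orthogonal sum
`A^{l₁}(n₁) ⊥ … ⊥ A^{l_s}(n_s)` with all `nⱼ ∈ {-3, -1, 1, 3}`. -/
theorem stmt13 {G : Type} [AddCommGroup G] [Fintype G]
    (h2group : ∀ x : G, ∃ n : ℕ, addOrderOf x = 2 ^ n)
    (B : G → G → AddCircle (1 : ℚ))
    (hsymm : ∀ x y : G, B x y = B y x)
    (haddl : ∀ x y z : G, B (x + y) z = B x z + B y z)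
    (hnd : ∀ x : G, (∀ y : G, B x y = 0) → x = 0) :
    ∃ (r s : ℕ) (k : Fin r → ℕ) (l : Fin s → ℕ) (n : Fin s → ℤ),
      (∀ i, 1 ≤ k i) ∧ (∀ j, 1 ≤ l j) ∧
      (∀ j, n j = -3 ∨ n j = -1 ∨ n j = 1 ∨ n j = 3) ∧
      ∃ φ : (G × ∀ i : Fin r, ZMod (2 ^ k i)) ≃+ (∀ j : Fin s, ZMod (2 ^ l j)),
        ∀ a b : G × ∀ i : Fin r, ZMod (2 ^ k i),
          B a.1 b.1 + ∑ i : Fin r, cyclicPairing (2 ^ k i) 1 (a.2 i) (b.2 i) =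
            ∑ j : Fin s, cyclicPairing (2 ^ l j) (n j) (φ a j) (φ b j) := by  classical
  let B' : G →+ G →+ AddCircle (1 : ℚ) := AddMonoidHom.mk' (fun x =>
    AddMonoidHom.mk' (B x) (fun y z => by rw [hsymm, haddl, hsymm y, hsymm z]))
    (fun x y => by ext z; exact haddl x y z)
  have hB' : IsLinking B' :=
    ⟨inferInstance, fun x => (h2group x).imp fun n hn => by
      rw [← hn, addOrderOf_nsmul_eq_zero],
      hsymm, hnd⟩
  obtain ⟨r, s, k, l, n, hk, hl, hn, φ, hφ⟩ := stablyDiagonal_of_card _ hB' rfl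
  refine ⟨r, s, k, l, n, hk, hl, hn, φ, fun a b => ?_⟩
  simp only [← cycHom_eq]
  exact hφ a b
end

section
/- For every integer k ≥ 1, the orthogonal sum of two copies of the linking pairing A^k(1) is isomorphic to the orthogonal sum of two copies of A^k(−3); that is, there is an additive automorphism φ = (φ₁, φ₂) of (ℤ/2^kℤ) × (ℤ/2^kℤ) such that (x x' + y y')/2^k ≡ −3·(φ₁(x,y)·φ₁(x',y') + φ₂(x,y)·φ₂(x',y'))/2^k (mod ℤ) for all (x, y), (x', y'). -/
/-- The step replaces `u` by `u + 2 ^ (k + 2)` when necessary, which changes `3 u² + 13` by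
`2 ^ (k + 3)` times an odd number. -/
lemma exists_two_pow_dvd (k : ℕ) :
    ∃ u : ℤ, Odd u ∧ (2 : ℤ) ^ (k + 3) ∣ 3 * u ^ 2 + 13 := by
  induction k with
  | zero => exact ⟨1, odd_one, by norm_num⟩
  | succ k ih =>
    obtain ⟨u, ⟨a, ha⟩, c, hc⟩ := ih
    obtain ⟨d, hd⟩ | ⟨d, hd⟩ := Int.even_or_odd c
    · exact ⟨u, ⟨a, ha⟩, d, by rw [hc, hd]; ring⟩
    · refine ⟨u + 2 ^ (k + 2), ⟨a + 2 ^ (k + 1), by rw [ha]; ring⟩,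
        d + 2 + 3 * a + 3 * 2 ^ k, ?_⟩
      have h : 3 * (u + 2 ^ (k + 2)) ^ 2 + 13
          = (3 * u ^ 2 + 13) + 3 * 2 ^ (k + 3) * u + 3 * 2 ^ (2 * k + 4) := by ring
      rw [h, hc, hd, ha]
      ring

/-- The homomorphism `ℤ/N → ℚ/ℤ` sending `1` to `1/N`. -/
noncomputable def toRatCircle (N : ℕ) [NeZero N] : ZMod N →+ AddCircle (1 : ℚ) :=
  ZMod.lift N ⟨zmultiplesHom _ (((1 / N : ℚ)) : AddCircle (1 : ℚ)), by
    have hN : (N : ℚ) ≠ 0 := Nat.cast_ne_zero.mpr (NeZero.ne N)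
    rw [zmultiplesHom_apply, ← AddCircle.coe_zsmul, zsmul_eq_mul, Int.cast_natCast,
      mul_one_div_cancel hN]
    exact AddCircle.coe_period 1⟩

lemma cyclicPairing_eq (N : ℕ) [NeZero N] (s : ℤ) (x y : ZMod N) :
    cyclicPairing N s x y = toRatCircle N (s * x * y) := by
  have h : (s * x * y : ZMod N) = ((s * x.val * y.val : ℤ) : ZMod N) := by simp
  rw [h, toRatCircle, ZMod.lift_coe, zmultiplesHom_apply, ← AddCircle.coe_zsmul, cyclicPairing]
  congr 1
  rw [zsmul_eq_mul]
  push_cast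
  ring

/-- For `k ≥ 1`, the orthogonal sum of two copies of `A^k(1)` is
isomorphic to the orthogonal sum of two copies of `A^k(-3)`. -/
theorem stmt14 (k : ℕ) (hk : 1 ≤ k) :
    ∃ φ : (ZMod (2 ^ k) × ZMod (2 ^ k)) ≃+ (ZMod (2 ^ k) × ZMod (2 ^ k)),
      ∀ a b : ZMod (2 ^ k) × ZMod (2 ^ k),
        cyclicPairing (2 ^ k) 1 a.1 b.1 + cyclicPairing (2 ^ k) 1 a.2 b.2 =
          cyclicPairing (2 ^ k) (-3) (φ a).1 (φ b).1 +
            cyclicPairing (2 ^ k) (-3) (φ a).2 (φ b).2 := by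
  obtain ⟨w, -, hw⟩ := exists_two_pow_dvd k
  obtain ⟨u, hu⟩ : ∃ u : ZMod (2 ^ k), 3 * u ^ 2 + 13 = 0 := by
    refine ⟨w, ?_⟩
    have h := (ZMod.intCast_zmod_eq_zero_iff_dvd (3 * w ^ 2 + 13) (2 ^ k)).2
      (by push_cast; exact (pow_dvd_pow 2 (by omega)).trans hw)
    exact_mod_cast h
  -- The inverse is `-3` times the transpose, since `-3 (u² + 4) = 1`.
  refine ⟨{ toFun := fun p => (u * p.1 - 2 * p.2, 2 * p.1 + u * p.2)
            invFun := fun p => (-3 * (u * p.1 + 2 * p.2), -3 * (-2 * p.1 + u * p.2))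
            left_inv := ?_
            right_inv := ?_
            map_add' := ?_ }, ?_⟩
  · rintro ⟨x, y⟩
    ext
    · linear_combination (-x) * hu
    · linear_combination (-y) * hu
  · rintro ⟨x, y⟩
    ext
    · linear_combination (-x) * hu
    · linear_combination (-y) * hu
  · rintro ⟨x, y⟩ ⟨x', y'⟩
    ext
    · simp only [Prod.mk_add_mk]; ring
    · simp only [Prod.mk_add_mk]; ring
  · rintro ⟨x, y⟩ ⟨x', y'⟩
    simp only [cyclicPairing_eq, ← map_add]
    congr 1
    simp only [AddEquiv.coe_mk, Equiv.coe_fn_mk]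
    push_cast
    linear_combination (x * x' + y * y') * hu
end

section
/- For every integer k ≥ 1, there exist n₁, n₂, n₃ ∈ {−3, −1, 1, 3} such that the orthogonal sum of four copies of the linking pairing A^k(1) is isomorphic to the orthogonal sum A^k(3) ⊥ A^k(n₁) ⊥ A^k(n₂) ⊥ A^k(n₃). -/
/-- The linking pairing factors as multiplication in `ZMod N` followed by `x ↦ x / N`. -/
lemma exists_hom_cyclicPairing (N : ℕ) [NeZero N] :
    ∃ f : ZMod N →+ AddCircle (1 : ℚ), ∀ (s : ℤ) (x y : ZMod N),
      cyclicPairing N s x y = f ((s : ZMod N) * x * y) := by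
  have hN : (N : ℚ) ≠ 0 := Nat.cast_ne_zero.mpr (NeZero.ne N)
  let g : ℤ →+ AddCircle (1 : ℚ) :=
    zmultiplesHom _ (((1 / (N : ℚ) : ℚ)) : AddCircle (1 : ℚ))
  have hg : ∀ m : ℤ, g m = (((m : ℚ) / N : ℚ) : AddCircle (1 : ℚ)) := by
    intro m
    simp only [g, zmultiplesHom_apply]
    rw [← AddCircle.coe_zsmul]
    congr 1
    simp [div_eq_mul_inv]
  have hgN : g N = 0 := by
    rw [hg, Int.cast_natCast, div_self hN]
    exact AddCircle.coe_period 1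
  refine ⟨ZMod.lift N ⟨g, hgN⟩, fun s x y => ?_⟩
  have hxy : (s : ZMod N) * x * y = ((s * x.val * y.val : ℤ) : ZMod N) := by
    push_cast
    simp only [ZMod.natCast_val, ZMod.cast_id', id]
  rw [hxy, ZMod.lift_coe]
  change _ = g _
  rw [hg, cyclicPairing]
  push_cast
  rfl

/-- Left multiplication by the quaternion `i + j + k` in the basis `1, i, j, k`, scaled by an
inverse `c` of `3`; the inverse is left multiplication by `-(i + j + k)`. -/
def quaternionEquiv {R : Type*} [CommRing R] (c : R) (hc : 3 * c = 1) :
    (Fin 4 → R) ≃+ (Fin 4 → R) where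
  toFun a := ![c * (-a 1 - a 2 - a 3), c * (a 0 + a 3 - a 2), c * (a 0 + a 1 - a 3),
    c * (a 0 + a 2 - a 1)]
  invFun a := ![a 1 + a 2 + a 3, a 2 - a 0 - a 3, a 3 - a 0 - a 1, a 1 - a 0 - a 2]
  left_inv a := by
    ext i
    fin_cases i <;> simp
    · linear_combination a 0 * hc
    · linear_combination a 1 * hc
    · linear_combination a 2 * hc
    · linear_combination a 3 * hc
  right_inv a := by
    ext i
    fin_cases i <;> simp
    · linear_combination a 0 * hc
    · linear_combination a 1 * hc
    · linear_combination a 2 * hc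
    · linear_combination a 3 * hc
  map_add' a b := by
    ext i
    fin_cases i <;> simp <;> ring

/-- For `k ≥ 1`, there are `n₁, n₂, n₃ ∈ {-3, -1, 1, 3}` such that the
orthogonal sum of four copies of `A^k(1)` is isomorphic to
`A^k(3) ⊥ A^k(n₁) ⊥ A^k(n₂) ⊥ A^k(n₃)`. -/
theorem stmt15 (k : ℕ) (hk : 1 ≤ k) :
    ∃ n : Fin 3 → ℤ,
      (∀ i, n i = -3 ∨ n i = -1 ∨ n i = 1 ∨ n i = 3) ∧
      ∃ φ : (Fin 4 → ZMod (2 ^ k)) ≃+ (Fin 4 → ZMod (2 ^ k)),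
        ∀ a b : Fin 4 → ZMod (2 ^ k),
          ∑ i : Fin 4, cyclicPairing (2 ^ k) 1 (a i) (b i) =
            cyclicPairing (2 ^ k) 3 (φ a 0) (φ b 0) +
              ∑ i : Fin 3, cyclicPairing (2 ^ k) (n i) (φ a i.succ) (φ b i.succ) := by
  obtain ⟨f, hf⟩ := exists_hom_cyclicPairing (2 ^ k)
  obtain ⟨c, hc⟩ : ∃ c : ZMod (2 ^ k), 3 * c = 1 := by
    have h : Nat.Coprime 3 (2 ^ k) := Nat.Coprime.pow_right k (by norm_num)
    exact ⟨_, by simpa using ZMod.coe_mul_inv_eq_one 3 h⟩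
  refine ⟨fun _ => 3, fun _ => by simp, quaternionEquiv c hc, fun a b => ?_⟩
  simp only [hf, ← map_sum, ← map_add]
  congr 1
  simp only [Fin.sum_univ_four, Fin.sum_univ_three, quaternionEquiv, AddEquiv.coe_mk,
    Equiv.coe_fn_mk]
  simp
  -- The difference of the two sides is `(1 - 9 c²) ⟨a, b⟩`, and `9 c² - 1 = (3 c + 1) (3 c - 1)`.
  linear_combination
    (-(3 * c + 1) * (a 0 * b 0 + a 1 * b 1 + a 2 * b 2 + a 3 * b 3)) * hc
end

section
/- Let κ be a rule assigning a real number κ(G, B) to every finite abelian group G equipped with a nondegenerate symmetric biadditive pairing B : G × G → ℚ/ℤ, and suppose: (i) κ(G, B) = κ(G', B') whenever (G, B) and (G', B') are isomorphic linking pairings; (ii) κ of an orthogonal sum equals the sum of the values of κ on the summands; and (iii) κ(G, −B) = −κ(G, B) for every such pair. Then κ(G, B) = 0 for every finite abelian group G with nondegenerate symmetric pairing B. -/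
/-!
For every linking pairing `(G, B)` the orthogonal sum of four copies of `(G, B)` is isomorphic to
its own negative. Indeed, write `|G| - 1 = a² + b² + c² + d²` by Lagrange's four-square theorem and
let `M` be the integer matrix of left multiplication by the quaternion `a + bi + cj + dk`, so that
`Mᵀ M = (|G| - 1) • 1`. Acting on `G⁴`, the matrix `M` multiplies the pairing `B⁴` by `|G| - 1`, and
`|G|` annihilates all values of `B`, so it sends `B⁴` to `-B⁴`
(`IsLinkingPairing.exists_fourfold_anti_isometry`). Hence `κ(B⁴) = κ(-B⁴) = -κ(B⁴)`, so
`4 κ(B) = κ(B⁴) = 0`.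
-/

/-- A (nondegenerate) linking pairing on a finite abelian group `G`: a symmetric
biadditive map `B : G × G → ℚ/ℤ` such that `x ↦ B x ·` is injective. -/
def IsLinkingPairing (G : Type) [AddCommGroup G] [Fintype G]
    (B : G → G → AddCircle (1 : ℚ)) : Prop :=
  (∀ x y : G, B x y = B y x) ∧
  (∀ x y z : G, B (x + y) z = B x z + B y z) ∧
  (∀ x : G, (∀ y : G, B x y = 0) → x = 0)

namespace IsLinkingPairing

variable {G : Type} [AddCommGroup G] [Fintype G] {B : G → G → AddCircle (1 : ℚ)}

theorem map_zero_left (h : IsLinkingPairing G B) (y : G) : B 0 y = 0 := by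
  simpa using h.2.1 0 0 y

theorem map_zero_right (h : IsLinkingPairing G B) (x : G) : B x 0 = 0 := by
  rw [h.1, h.map_zero_left]

theorem prod (h : IsLinkingPairing G B) {G' : Type} [AddCommGroup G'] [Fintype G']
    {B' : G' → G' → AddCircle (1 : ℚ)} (h' : IsLinkingPairing G' B') :
    IsLinkingPairing (G × G') (fun x y => B x.1 y.1 + B' x.2 y.2) := by
  refine ⟨fun x y => ?_, fun x y z => ?_, fun x hx => ?_⟩
  · simp only [h.1 x.1, h'.1 x.2]
  · simp only [Prod.fst_add, Prod.snd_add, h.2.1, h'.2.1]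
    abel
  · refine Prod.ext (h.2.2 _ fun y => ?_) (h'.2.2 _ fun y => ?_)
    · simpa [h'.map_zero_right] using hx (y, 0)
    · simpa [h.map_zero_right] using hx (0, y)

theorem neg (h : IsLinkingPairing G B) : IsLinkingPairing G (fun x y => -(B x y)) := by
  refine ⟨fun x y => ?_, fun x y z => ?_, fun x hx => h.2.2 x fun y => neg_eq_zero.mp (hx y)⟩
  · simp only [h.1 x]
  · simp only [h.2.1, neg_add]

/-- A linking pairing as a bundled `ℤ`-bilinear map. -/
def toHom (h : IsLinkingPairing G B) : G →+ G →+ AddCircle (1 : ℚ) :=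
  AddMonoidHom.mk' (fun x => AddMonoidHom.mk' (B x) fun y z => by
    rw [h.1, h.2.1, h.1 y, h.1 z]) fun x y => by
      ext z
      exact h.2.1 x y z

theorem toHom_apply (h : IsLinkingPairing G B) (x y : G) : h.toHom x y = B x y := rfl

/-- An endomorphism reversing the sign of a linking pairing is bijective: it is injective because
the negated pairing is nondegenerate, and the group is finite. -/
theorem exists_equiv_of_anti_isometry (h : IsLinkingPairing G B) (f : G →+ G)
    (hf : ∀ x y, B (f x) (f y) = -(B x y)) :
    ∃ φ : G ≃+ G, ∀ x y, B (φ x) (φ y) = -(B x y) := by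
  have hinj : Function.Injective f := by
    refine (injective_iff_map_eq_zero f).mpr fun x hx => h.neg.2.2 x fun y => ?_
    rw [← h.map_zero_left (f y), ← hx, hf]
  exact ⟨AddEquiv.ofBijective f (Finite.injective_iff_bijective.mp hinj), hf⟩

/-- Left multiplication by the quaternion `a + bi + cj + dk` on `G⁴`. -/
def quaternionHom (G : Type) [AddCommGroup G] (a b c d : ℤ) :
    (G × G) × (G × G) →+ (G × G) × (G × G) :=
  AddMonoidHom.mk' (fun x =>
    ((a • x.1.1 - b • x.1.2 - c • x.2.1 - d • x.2.2,
      b • x.1.1 + a • x.1.2 - d • x.2.1 + c • x.2.2),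
     (c • x.1.1 + d • x.1.2 + a • x.2.1 - b • x.2.2,
      d • x.1.1 - c • x.1.2 + b • x.2.1 + a • x.2.2))) fun x y => by
    ext <;> simp only [Prod.fst_add, Prod.snd_add] <;> module

/-- Multiplication by a quaternion scales the fourfold sum of a pairing by the quaternion norm. -/
theorem fourfold_quaternionHom (h : IsLinkingPairing G B) (a b c d : ℤ)
    (x y : (G × G) × (G × G)) :
    let B₄ := fun x y : (G × G) × (G × G) =>
      (B x.1.1 y.1.1 + B x.1.2 y.1.2) + (B x.2.1 y.2.1 + B x.2.2 y.2.2)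
    B₄ (quaternionHom G a b c d x) (quaternionHom G a b c d y)
      = (a ^ 2 + b ^ 2 + c ^ 2 + d ^ 2) • B₄ x y := by
  simp only [quaternionHom, AddMonoidHom.mk'_apply, ← h.toHom_apply, map_add, map_sub, map_zsmul,
    AddMonoidHom.add_apply, AddMonoidHom.sub_apply, AddMonoidHom.zsmul_apply]
  module

theorem card_pred_zsmul (h : IsLinkingPairing G B) (x y : G) :
    ((Fintype.card G - 1 : ℕ) : ℤ) • B x y = -(B x y) := by
  have h0 : (Fintype.card G : ℤ) • B x y = 0 := by
    rw [← h.toHom_apply, ← AddMonoidHom.zsmul_apply, ← map_zsmul, natCast_zsmul,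
      card_nsmul_eq_zero, map_zero, AddMonoidHom.zero_apply]
  rw [Nat.cast_sub Fintype.card_pos, sub_zsmul, h0]
  simp

theorem exists_fourfold_anti_isometry (h : IsLinkingPairing G B) :
    let B₄ := fun x y : (G × G) × (G × G) =>
      (B x.1.1 y.1.1 + B x.1.2 y.1.2) + (B x.2.1 y.2.1 + B x.2.2 y.2.2)
    ∃ φ : (G × G) × (G × G) ≃+ (G × G) × (G × G), ∀ x y, B₄ (φ x) (φ y) = -(B₄ x y) := by
  obtain ⟨a, b, c, d, habcd⟩ := Nat.sum_four_squares (Fintype.card G - 1)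
  refine ((h.prod h).prod (h.prod h)).exists_equiv_of_anti_isometry
    (quaternionHom G a b c d) fun x y => ?_
  have hcast : ((a : ℤ) ^ 2 + b ^ 2 + c ^ 2 + d ^ 2) = ((Fintype.card G - 1 : ℕ) : ℤ) := by
    exact_mod_cast habcd
  refine (h.fourfold_quaternionHom a b c d x y).trans ?_
  simp only [hcast, zsmul_add, h.card_pred_zsmul]
  abel

end IsLinkingPairing


/-- A real-valued rule `κ` on finite abelian groups with nondegenerate
symmetric pairings that is invariant under isomorphism of linking pairings, additive
under orthogonal sum, and changes sign when the pairing is negated, vanishes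
identically. -/
theorem stmt16
    (κ : ∀ (G : Type) [AddCommGroup G] [Fintype G], (G → G → AddCircle (1 : ℚ)) → ℝ)
    (hiso : ∀ (G : Type) [AddCommGroup G] [Fintype G]
        (G' : Type) [AddCommGroup G'] [Fintype G']
        (B : G → G → AddCircle (1 : ℚ)) (B' : G' → G' → AddCircle (1 : ℚ)),
        IsLinkingPairing G B → IsLinkingPairing G' B' →
        (∃ φ : G ≃+ G', ∀ x y : G, B' (φ x) (φ y) = B x y) →
        κ G B = κ G' B')
    (hsum : ∀ (G : Type) [AddCommGroup G] [Fintype G]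
        (G' : Type) [AddCommGroup G'] [Fintype G']
        (B : G → G → AddCircle (1 : ℚ)) (B' : G' → G' → AddCircle (1 : ℚ)),
        IsLinkingPairing G B → IsLinkingPairing G' B' →
        κ (G × G') (fun a b => B a.1 b.1 + B' a.2 b.2) = κ G B + κ G' B')
    (hneg : ∀ (G : Type) [AddCommGroup G] [Fintype G]
        (B : G → G → AddCircle (1 : ℚ)), IsLinkingPairing G B →
        κ G (fun x y => -(B x y)) = -(κ G B)) :
    ∀ (G : Type) [AddCommGroup G] [Fintype G] (B : G → G → AddCircle (1 : ℚ)),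
      IsLinkingPairing G B → κ G B = 0 := by
  intro G _ _ B h
  have h₂ := h.prod h
  have h₄ := h₂.prod h₂
  have hanti := hiso _ _ _ _ h₄.neg h₄ h.exists_fourfold_anti_isometry
  rw [hneg _ _ h₄, hsum _ _ _ _ h₂ h₂, hsum _ _ _ _ h h] at hanti
  linarith
end
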